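/- arXiv:math/0507429 — 6 statements merged into one kernel-verified Lean document; each statement's English description precedes it below -/
import Mathlib

section
/- Let T be an invertible measure-preserving transformation of a probability space (X, 𝒜, μ) and S an invertible measure-preserving transformation of a probability space (Y, ℬ, ν), with S ergodic. If λ is a joining of T and S which is moreover invariant under the map Id × S : (x,y) ↦ (x, Sy), then λ = μ ⊗ ν, the product measure. -/
open MeasureTheory

/-!
For a measurable set `A` of `X`, the measure `κ_A B = λ (A × B)` on `Y` is absolutely continuous
with respect to `ν`, and it is `S`-invariant because `Id × S` preserves both `λ` and `A × Y`. By
ergodicity `κ_A` is a multiple of `ν`, and its total mass `μ A` identifies the multiple.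
-/

section Marginals

variable {X Y X' Y' : Type*} [MeasurableSpace X] [MeasurableSpace Y] [MeasurableSpace X']
  [MeasurableSpace Y'] {ρ : Measure (X × Y)}

theorem snd_restrict_fst_preimage_apply (A : Set X) {B : Set Y} (hB : MeasurableSet B) :
    (ρ.restrict (Prod.fst ⁻¹' A)).snd B = ρ (A ×ˢ B) := by
  rw [Measure.snd_apply hB, Measure.restrict_apply (measurable_snd hB), Set.inter_comm,
    Set.prod_eq]

theorem snd_restrict_fst_preimage_univ {A : Set X} (hA : MeasurableSet A) :
    (ρ.restrict (Prod.fst ⁻¹' A)).snd Set.univ = ρ.fst A := by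
  rw [snd_restrict_fst_preimage_apply A .univ, Set.prod_univ, Measure.fst_apply hA]

theorem measurePreserving_snd_of_prodMap {ρ' : Measure (X' × Y')} {f : X → X'} {g : Y → Y'}
    (hg : Measurable g) (hfg : MeasurePreserving (Prod.map f g) ρ ρ') :
    MeasurePreserving g ρ.snd ρ'.snd := by
  have hsnd : MeasurePreserving (g ∘ Prod.snd) ρ ρ'.snd :=
    (measurable_snd.measurePreserving ρ').comp hfg
  exact hsnd.map_of_comp hg measurable_snd

end Marginals

theorem measure_univ_smul_eq_of_ergodic {Y : Type*} [MeasurableSpace Y] {ν κ : Measure Y}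
    [IsFiniteMeasure ν] [IsFiniteMeasure κ] {S : Y → Y} (hS : Ergodic S ν)
    (hκ : MeasurePreserving S κ κ) (hκν : κ ≪ ν) :
    ν Set.univ • κ = κ Set.univ • ν := by
  obtain ⟨c, rfl⟩ := hS.eq_smul_of_absolutelyContinuous hκ hκν
  rw [smul_smul, Measure.smul_apply, smul_eq_mul, mul_comm]

theorem joining_invariant_id_prod_eq_prod_general {X Y : Type*} [MeasurableSpace X]
    [MeasurableSpace Y] {ν : Measure Y} [IsFiniteMeasure ν] {S : Y → Y} (hS : Ergodic S ν)
    {ρ : Measure (X × Y)} [IsFiniteMeasure ρ] (hρν : ρ.snd ≪ ν)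
    (hρ : MeasurePreserving (Prod.map (id : X → X) S) ρ ρ) :
    ν Set.univ • ρ = ρ.fst.prod ν := by
  refine (Measure.prod_eq fun A B hA hB ↦ ?_).symm
  set κ := (ρ.restrict (Prod.fst ⁻¹' A)).snd with hκ_def
  have hκ : MeasurePreserving S κ κ :=
    measurePreserving_snd_of_prodMap hS.measurable (hρ.restrict_preimage (measurable_fst hA))
  have hκν : κ ≪ ν := (Measure.snd_mono Measure.restrict_le_self).absolutelyContinuous.trans hρν
  calc
    (ν Set.univ • ρ) (A ×ˢ B) = (ν Set.univ • κ) B := by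
      rw [Measure.smul_apply, Measure.smul_apply, hκ_def, snd_restrict_fst_preimage_apply A hB]
    _ = (κ Set.univ • ν) B := by rw [measure_univ_smul_eq_of_ergodic hS hκ hκν]
    _ = ρ.fst A * ν B := by
      rw [Measure.smul_apply, smul_eq_mul, hκ_def, snd_restrict_fst_preimage_univ hA]

/-- If `λ` is a joining of `T` and `S`, with `S` ergodic, and `λ` is moreover invariant
under `Id × S`, then `λ` is the product measure `μ ⊗ ν`. -/
theorem joining_invariant_id_prod_eq_prod
    {X Y : Type*} [MeasurableSpace X] [MeasurableSpace Y]
    (μ : Measure X) (ν : Measure Y) [IsProbabilityMeasure μ] [IsProbabilityMeasure ν]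
    (T : X ≃ᵐ X) (S : Y ≃ᵐ Y)
    (hT : MeasurePreserving T μ μ)
    (hS : Ergodic S ν)
    (lam : Measure (X × Y))
    (h1 : lam.map Prod.fst = μ)
    (h2 : lam.map Prod.snd = ν)
    (hinv : MeasurePreserving (Prod.map T S) lam lam)
    (hIdS : MeasurePreserving (Prod.map (id : X → X) S) lam lam) :
    lam = μ.prod ν := by
  have : IsProbabilityMeasure (lam.map Prod.fst) := h1 ▸ inferInstance
  have : IsProbabilityMeasure lam := Measure.isProbabilityMeasure_of_map Prod.fst
  have hprod := joining_invariant_id_prod_eq_prod_general hS h2.absolutelyContinuous hIdS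
  rwa [measure_univ, one_smul, Measure.fst, h1] at hprod
end

section
/- Let T be a weakly mixing invertible measure-preserving transformation of a probability space (X, 𝒜, μ). Then for every integer k ≥ 1 and all measurable subsets A₀, A₁, …, A_k of X, the averages (1/n) · Σ_{j=1}^{n} μ(A₀ ∩ T^{−j}A₁ ∩ T^{−2j}A₂ ∩ ⋯ ∩ T^{−kj}A_k) converge, as n → ∞, to μ(A₀)·μ(A₁)⋯μ(A_k). -/
open MeasureTheory Filter

/-!
By van der Corput's inequality, bounded vectors `u n` of a Hilbert space have Cesàro means tending
to `0` as soon as the mean correlations `γ h = lim ⟪u n, u (n + h)⟫` tend to `0` in the mean.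
Apply this in `L²` to `u n = f₁ ∘ Tⁿ ⋯ f_k ∘ Tᵏⁿ` with `∫ f_k = 0`, and pair the result with `f₀`.
Up to the measure-preserving shift `Tⁿ`, the product `⟪u n, u (n + h)⟫` is an integral of the
original kind for the `k` functions `f_i ∘ Tⁱʰ · conj f_i`, so by induction on `k` it converges in
the mean to the product of the autocorrelations of the `f_i` at lags `i h`. The last factor tends to
`0` in the mean because its squared modulus is an autocorrelation of `T × T`, to which von Neumann's
mean ergodic theorem applies.
-/

open scoped Topology ComplexConjugate ENNReal

/-- The Cesàro mean `N⁻¹ • (u 0 + ⋯ + u (N - 1))`, equal to `0` for `N = 0`. The scalars `R` are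
explicit so that real means of norms and `𝕜`-valued means can be used side by side. -/
def cesaroMean (R : Type*) {E : Type*} [DivisionSemiring R] [AddCommMonoid E] [Module R E]
    (u : ℕ → E) (N : ℕ) : E :=
  (N : R)⁻¹ • ∑ n ∈ Finset.range N, u n

section Algebra

variable {R E : Type*} [DivisionSemiring R]

lemma map_cesaroMean (S : Type*) {E' F : Type*} [AddCommMonoid E] [Module R E] [DivisionSemiring S]
    [AddCommMonoid E'] [Module S E'] [FunLike F E E'] [AddMonoidHomClass F E E'] (φ : F)
    (u : ℕ → E) (N : ℕ) : φ (cesaroMean R u N) = cesaroMean S (fun n ↦ φ (u n)) N := by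
  rw [cesaroMean, map_inv_natCast_smul φ R S, map_sum, cesaroMean]

lemma cesaroMean_finsetSum [AddCommMonoid E] [Module R E] {ι : Type*} (s : Finset ι)
    (u : ι → ℕ → E) (N : ℕ) :
    cesaroMean R (fun n ↦ ∑ i ∈ s, u i n) N = ∑ i ∈ s, cesaroMean R (u i) N := by
  simp only [cesaroMean, Finset.smul_sum]
  exact Finset.sum_comm

lemma cesaroMean_add [AddCommMonoid E] [Module R E] (u v : ℕ → E) (N : ℕ) :
    cesaroMean R (fun n ↦ u n + v n) N = cesaroMean R u N + cesaroMean R v N := by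
  simp only [cesaroMean, Finset.sum_add_distrib, smul_add]

lemma cesaroMean_sub {R : Type*} [DivisionRing R] [AddCommGroup E] [Module R E] (u v : ℕ → E)
    (N : ℕ) : cesaroMean R (fun n ↦ u n - v n) N = cesaroMean R u N - cesaroMean R v N := by
  simp only [cesaroMean, Finset.sum_sub_distrib, smul_sub]

lemma cesaroMean_const [CharZero R] [AddCommMonoid E] [Module R E] (c : E) {N : ℕ} (hN : N ≠ 0) :
    cesaroMean R (fun _ ↦ c) N = c := by
  rw [cesaroMean, Finset.sum_const, Finset.card_range, ← Nat.cast_smul_eq_nsmul R,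
    inv_smul_smul₀ (Nat.cast_ne_zero.2 hN)]

lemma cesaroMean_comm {R : Type*} [Field R] [AddCommMonoid E] [Module R E] (w : ℕ → ℕ → E)
    (M N : ℕ) : cesaroMean R (fun n ↦ cesaroMean R (w n) M) N =
      cesaroMean R (fun m ↦ cesaroMean R (fun n ↦ w n m) N) M := by
  simp only [cesaroMean, ← Finset.smul_sum]
  rw [smul_comm, Finset.sum_comm]

lemma cesaroMean_const_mul {R : Type*} [Field R] (c : R) (u : ℕ → R) (N : ℕ) :
    cesaroMean R (fun n ↦ c * u n) N = c * cesaroMean R u N :=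
  (map_cesaroMean R (AddMonoidHom.mulLeft c) u N).symm

end Algebra

section Real

variable {a b : ℕ → ℝ}

lemma cesaroMean_mono (hab : ∀ n, a n ≤ b n) (N : ℕ) : cesaroMean ℝ a N ≤ cesaroMean ℝ b N :=
  smul_le_smul_of_nonneg_left (Finset.sum_le_sum fun n _ ↦ hab n) (by positivity)

lemma cesaroMean_nonneg (ha : ∀ n, 0 ≤ a n) (N : ℕ) : 0 ≤ cesaroMean ℝ a N :=
  smul_nonneg (by positivity) (Finset.sum_nonneg fun n _ ↦ ha n)

lemma sq_cesaroMean_le (a : ℕ → ℝ) (N : ℕ) :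
    cesaroMean ℝ a N ^ 2 ≤ cesaroMean ℝ (fun n ↦ a n ^ 2) N := by
  rcases N.eq_zero_or_pos with rfl | hN
  · simp [cesaroMean]
  have cauchySchwarz := sq_sum_le_card_mul_sum_sq (s := Finset.range N) (f := a)
  rw [Finset.card_range] at cauchySchwarz
  calc cesaroMean ℝ a N ^ 2 = (N : ℝ)⁻¹ ^ 2 * (∑ n ∈ Finset.range N, a n) ^ 2 := mul_pow _ _ 2
    _ ≤ (N : ℝ)⁻¹ ^ 2 * (N * ∑ n ∈ Finset.range N, a n ^ 2) := by gcongr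
    _ = cesaroMean ℝ (fun n ↦ a n ^ 2) N := by
      rw [cesaroMean, smul_eq_mul]
      field_simp

lemma tendsto_cesaroMean_of_sq (h : Tendsto (cesaroMean ℝ fun n ↦ a n ^ 2) atTop (𝓝 0)) :
    Tendsto (cesaroMean ℝ a) atTop (𝓝 0) := by
  have hsq : Tendsto (fun N ↦ cesaroMean ℝ a N ^ 2) atTop (𝓝 0) :=
    squeeze_zero (fun _ ↦ sq_nonneg _) (sq_cesaroMean_le a) h
  rw [tendsto_zero_iff_abs_tendsto_zero]
  simpa only [Function.comp_def, Real.sqrt_sq_eq_abs, Real.sqrt_zero] using hsq.sqrt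

lemma cesaroMean_comp_mul_le (ha : ∀ n, 0 ≤ a n) {q : ℕ} (hq : q ≠ 0) (N : ℕ) :
    cesaroMean ℝ (fun n ↦ a (q * n)) N ≤ q * cesaroMean ℝ a (q * N) := by
  have hsum : ∑ n ∈ Finset.range N, a (q * n) ≤ ∑ n ∈ Finset.range (q * N), a n := by
    rw [← Finset.sum_image (f := a) (g := (q * ·)) ((mul_right_injective₀ hq).injOn)]
    refine Finset.sum_le_sum_of_subset_of_nonneg (Finset.image_subset_iff.2 fun n hn ↦ ?_)
      fun n _ _ ↦ ha n
    exact Finset.mem_range.2 (Nat.mul_lt_mul_of_pos_left (Finset.mem_range.1 hn) hq.bot_lt)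
  calc cesaroMean ℝ (fun n ↦ a (q * n)) N ≤ (N : ℝ)⁻¹ * ∑ n ∈ Finset.range (q * N), a n :=
        mul_le_mul_of_nonneg_left hsum (by positivity)
    _ = q * cesaroMean ℝ a (q * N) := by
      rw [cesaroMean, smul_eq_mul, Nat.cast_mul, mul_inv, mul_assoc,
        mul_inv_cancel_left₀ (Nat.cast_ne_zero.2 hq)]

lemma tendsto_cesaroMean_comp_mul (ha : ∀ n, 0 ≤ a n)
    (h : Tendsto (cesaroMean ℝ a) atTop (𝓝 0)) {q : ℕ} (hq : q ≠ 0) :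
    Tendsto (cesaroMean ℝ fun n ↦ a (q * n)) atTop (𝓝 0) := by
  have hsub : Tendsto (fun N ↦ q * cesaroMean ℝ a (q * N)) atTop (𝓝 0) := by
    simpa using (h.comp (tendsto_id.const_mul_atTop' hq.bot_lt)).const_mul (q : ℝ)
  exact squeeze_zero (cesaroMean_nonneg fun n ↦ ha _) (cesaroMean_comp_mul_le ha hq) hsub

end Real

section Normed

variable {𝕜 E : Type*} [RCLike 𝕜] [NormedAddCommGroup E] [NormedSpace 𝕜 E] {u : ℕ → E} {C : ℝ}

lemma norm_cesaroMean_le (u : ℕ → E) (N : ℕ) :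
    ‖cesaroMean 𝕜 u N‖ ≤ cesaroMean ℝ (fun n ↦ ‖u n‖) N := by
  rw [cesaroMean, norm_smul, norm_inv, RCLike.norm_natCast]
  exact mul_le_mul_of_nonneg_left (norm_sum_le _ _) (by positivity)

lemma norm_cesaroMean_sq_le (u : ℕ → E) (N : ℕ) :
    ‖cesaroMean 𝕜 u N‖ ^ 2 ≤ cesaroMean ℝ (fun n ↦ ‖u n‖ ^ 2) N :=
  (pow_le_pow_left₀ (norm_nonneg _) (norm_cesaroMean_le u N) 2).trans (sq_cesaroMean_le _ N)

lemma tendsto_cesaroMean_const (c : E) : Tendsto (cesaroMean 𝕜 fun _ ↦ c) atTop (𝓝 c) :=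
  tendsto_const_nhds.congr' <| (eventually_ne_atTop 0).mono fun _ hN ↦ (cesaroMean_const c hN).symm

variable (𝕜) in
lemma tendsto_cesaroMean_shift_sub (hu : ∀ n, ‖u n‖ ≤ C) (h : ℕ) :
    Tendsto (fun N ↦ cesaroMean 𝕜 (fun n ↦ u (n + h)) N - cesaroMean 𝕜 u N) atTop (𝓝 0) := by
  have hbdd : Bornology.IsBounded (Set.range u) :=
    isBounded_iff_forall_norm_le.2 ⟨C, Set.forall_mem_range.2 hu⟩
  induction h with
  | zero => simp
  | succ h ih =>
    have hstep := (tendsto_birkhoffAverage_apply_sub_birkhoffAverage' 𝕜 hbdd Nat.succ h).add ih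
    simpa [birkhoffAverage, birkhoffSum, Nat.succ_iterate, cesaroMean, add_comm, add_left_comm]
      using hstep

lemma tendsto_cesaroMean_shift {l : E} (hu : ∀ n, ‖u n‖ ≤ C)
    (hl : Tendsto (cesaroMean 𝕜 u) atTop (𝓝 l)) (h : ℕ) :
    Tendsto (cesaroMean 𝕜 fun n ↦ u (n + h)) atTop (𝓝 l) := by
  simpa using (tendsto_cesaroMean_shift_sub 𝕜 hu h).add hl

variable (𝕜) in
lemma tendsto_cesaroMean_window_sub (hu : ∀ n, ‖u n‖ ≤ C) {H : ℕ} (hH : H ≠ 0) :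
    Tendsto (fun N ↦ cesaroMean 𝕜 (fun n ↦ cesaroMean 𝕜 (fun h ↦ u (n + h)) H) N -
      cesaroMean 𝕜 u N) atTop (𝓝 0) := by
  have hswap (N : ℕ) : cesaroMean 𝕜 (fun n ↦ cesaroMean 𝕜 (fun h ↦ u (n + h)) H) N -
      cesaroMean 𝕜 u N =
      cesaroMean 𝕜 (fun h ↦ cesaroMean 𝕜 (fun n ↦ u (n + h)) N - cesaroMean 𝕜 u N) H := by
    rw [cesaroMean_sub, cesaroMean_const _ hH, cesaroMean_comm]
  simp only [hswap]
  simpa only [cesaroMean, Finset.sum_const_zero, smul_zero] using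
    (tendsto_finsetSum (Finset.range H) fun h _ ↦
      tendsto_cesaroMean_shift_sub 𝕜 hu h).const_smul ((H : 𝕜)⁻¹)

end Normed

section VanDerCorput

variable {𝕜 E : Type*} [RCLike 𝕜] [NormedAddCommGroup E] [InnerProductSpace 𝕜 E]

open Finset in
lemma norm_sum_range_sq_le (x : ℕ → E) (H : ℕ) :
    ‖∑ i ∈ range H, x i‖ ^ 2 ≤
      2 * ∑ b ∈ range H, ∑ d ∈ range (b + 1), RCLike.re (inner 𝕜 (x (b - d)) (x b)) := by
  induction H with
  | zero => simp
  | succ H ih =>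
    have hlast : ∑ d ∈ range (H + 1), RCLike.re (inner 𝕜 (x (H - d)) (x H)) =
        RCLike.re (inner 𝕜 (∑ i ∈ range H, x i) (x H)) + ‖x H‖ ^ 2 := by
      rw [sum_flip fun i ↦ RCLike.re (inner 𝕜 (x i) (x H)), sum_range_succ, sum_inner, map_sum,
        inner_self_eq_norm_sq]
    rw [sum_range_succ, sum_range_succ (fun b ↦ ∑ d ∈ range (b + 1), _), hlast,
      norm_add_sq (𝕜 := 𝕜)]
    linarith [sq_nonneg ‖x H‖]

lemma tendsto_cesaroMean_re_inner_shift {u : ℕ → E} {C : ℝ} (hu : ∀ n, ‖u n‖ ≤ C) {γ : 𝕜} {d : ℕ}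
    (hγ : Tendsto (cesaroMean 𝕜 fun n ↦ inner 𝕜 (u n) (u (n + d))) atTop (𝓝 γ)) (a : ℕ) :
    Tendsto (cesaroMean ℝ fun n ↦ RCLike.re (inner 𝕜 (u (n + a)) (u (n + a + d)))) atTop
      (𝓝 (RCLike.re γ)) := by
  have hbdd (n : ℕ) : ‖inner 𝕜 (u n) (u (n + d))‖ ≤ C * C :=
    (norm_inner_le_norm _ _).trans <|
      mul_le_mul (hu _) (hu _) (norm_nonneg _) ((norm_nonneg _).trans (hu 0))
  refine ((RCLike.continuous_re.tendsto γ).comp (tendsto_cesaroMean_shift hbdd hγ a)).congr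
    fun N ↦ ?_
  exact map_cesaroMean ℝ (RCLike.re : 𝕜 →+ ℝ) _ N

open Finset in
lemma norm_cesaroMean_sq_le_sum_inner (x : ℕ → E) (H : ℕ) :
    ‖cesaroMean 𝕜 x H‖ ^ 2 ≤ 2 * (H : ℝ)⁻¹ ^ 2 *
      ∑ b ∈ range H, ∑ d ∈ range (b + 1), RCLike.re (inner 𝕜 (x (b - d)) (x b)) := by
  rw [cesaroMean, norm_smul, norm_inv, RCLike.norm_natCast, mul_pow, mul_comm 2, mul_assoc]
  exact mul_le_mul_of_nonneg_left (norm_sum_range_sq_le x H) (by positivity)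

open Finset in
lemma sum_sum_re_le (γ : ℕ → 𝕜) (H : ℕ) :
    ∑ b ∈ range H, ∑ d ∈ range (b + 1), RCLike.re (γ d) ≤ H * ∑ d ∈ range H, ‖γ d‖ := by
  rw [← nsmul_eq_mul, ← card_range H, ← sum_const, card_range]
  refine sum_le_sum fun b hb ↦ (sum_le_sum fun d _ ↦ RCLike.re_le_norm (γ d)).trans ?_
  exact sum_le_sum_of_subset_of_nonneg (range_subset_range.2 (mem_range.1 hb))
    fun d _ _ ↦ norm_nonneg _

variable {u : ℕ → E} {C : ℝ} {γ : ℕ → 𝕜}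

open Finset in
lemma tendsto_cesaroMean_sum_re_inner (hu : ∀ n, ‖u n‖ ≤ C)
    (hγ : ∀ h, Tendsto (cesaroMean 𝕜 fun n ↦ inner 𝕜 (u n) (u (n + h))) atTop (𝓝 (γ h))) (H : ℕ) :
    Tendsto (cesaroMean ℝ fun n ↦ ∑ b ∈ range H, ∑ d ∈ range (b + 1),
      RCLike.re (inner 𝕜 (u (n + (b - d))) (u (n + b)))) atTop
      (𝓝 (∑ b ∈ range H, ∑ d ∈ range (b + 1), RCLike.re (γ d))) := by
  simp only [funext (cesaroMean_finsetSum _ _)]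
  refine tendsto_finsetSum _ fun b _ ↦ tendsto_finsetSum _ fun d hd ↦ ?_
  have hdb : b - d + d = b := Nat.sub_add_cancel (Nat.lt_succ_iff.1 (mem_range.1 hd))
  simpa only [add_assoc, hdb] using tendsto_cesaroMean_re_inner_shift hu (hγ d) (b - d)

open Finset in
lemma eventually_norm_cesaroMean_lt (hu : ∀ n, ‖u n‖ ≤ C)
    (hγ : ∀ h, Tendsto (cesaroMean 𝕜 fun n ↦ inner 𝕜 (u n) (u (n + h))) atTop (𝓝 (γ h)))
    {H : ℕ} (hH : H ≠ 0) {ε : ℝ} (hε : √(2 * cesaroMean ℝ (fun h ↦ ‖γ h‖) H) < ε) :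
    ∀ᶠ N in atTop, ‖cesaroMean 𝕜 u N‖ < ε := by
  set w : ℕ → E := fun n ↦ cesaroMean 𝕜 (fun h ↦ u (n + h)) H
  set c : ℕ → ℝ := fun n ↦ ∑ b ∈ range H, ∑ d ∈ range (b + 1),
    RCLike.re (inner 𝕜 (u (n + (b - d))) (u (n + b)))
  set L : ℝ := ∑ b ∈ range H, ∑ d ∈ range (b + 1), RCLike.re (γ d)
  have hw (N : ℕ) : ‖cesaroMean 𝕜 w N‖ ≤ √(2 * (H : ℝ)⁻¹ ^ 2 * cesaroMean ℝ c N) := by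
    refine Real.le_sqrt_of_sq_le ((norm_cesaroMean_sq_le w N).trans ?_)
    rw [← cesaroMean_const_mul]
    exact cesaroMean_mono (fun n ↦ norm_cesaroMean_sq_le_sum_inner (fun h ↦ u (n + h)) H) N
  have hbound (N : ℕ) : ‖cesaroMean 𝕜 u N‖ ≤
      ‖cesaroMean 𝕜 w N - cesaroMean 𝕜 u N‖ + √(2 * (H : ℝ)⁻¹ ^ 2 * cesaroMean ℝ c N) :=
    (norm_le_norm_sub_add _ _).trans <| by rw [norm_sub_rev]; gcongr; exact hw N
  have hL : 2 * (H : ℝ)⁻¹ ^ 2 * L ≤ 2 * cesaroMean ℝ (fun h ↦ ‖γ h‖) H := by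
    calc 2 * (H : ℝ)⁻¹ ^ 2 * L ≤ 2 * (H : ℝ)⁻¹ ^ 2 * (H * ∑ d ∈ range H, ‖γ d‖) := by
          gcongr
          exact sum_sum_re_le γ H
      _ = 2 * cesaroMean ℝ (fun h ↦ ‖γ h‖) H := by
        rw [cesaroMean, smul_eq_mul]
        field_simp
  have hlim := (tendsto_cesaroMean_window_sub 𝕜 hu hH).norm.add
    ((tendsto_cesaroMean_sum_re_inner hu hγ H).const_mul (2 * (H : ℝ)⁻¹ ^ 2)).sqrt
  rw [norm_zero, zero_add] at hlim
  exact (hlim.eventually_lt_const ((Real.sqrt_le_sqrt hL).trans_lt hε)).mono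
    fun N hN ↦ (hbound N).trans_lt hN

theorem tendsto_cesaroMean_zero_of_inner (hu : ∀ n, ‖u n‖ ≤ C)
    (hγ : ∀ h, Tendsto (cesaroMean 𝕜 fun n ↦ inner 𝕜 (u n) (u (n + h))) atTop (𝓝 (γ h)))
    (hγ₀ : Tendsto (cesaroMean ℝ fun h ↦ ‖γ h‖) atTop (𝓝 0)) :
    Tendsto (cesaroMean 𝕜 u) atTop (𝓝 0) := by
  rw [tendsto_zero_iff_norm_tendsto_zero, Metric.tendsto_nhds]
  intro ε hε
  have hsmall : Tendsto (fun H ↦ √(2 * cesaroMean ℝ (fun h ↦ ‖γ h‖) H)) atTop (𝓝 0) := by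
    simpa using (hγ₀.const_mul 2).sqrt
  obtain ⟨H, hHε, hH⟩ :=
    ((hsmall.eventually_lt_const hε).and (eventually_ne_atTop 0)).exists
  simpa using eventually_norm_cesaroMean_lt hu hγ hH hHε

end VanDerCorput

section Ergodic

variable {X 𝕜 E : Type*} [MeasurableSpace X] [RCLike 𝕜] {μ : Measure X} {S : X → X}

lemma inner_toLp_eq_integral [NormedAddCommGroup E] [InnerProductSpace 𝕜 E] {f g : X → E}
    (hf : MemLp f 2 μ) (hg : MemLp g 2 μ) :
    inner 𝕜 (hf.toLp f) (hg.toLp g) = ∫ x, inner 𝕜 (f x) (g x) ∂μ := by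
  rw [L2.inner_def]
  refine integral_congr_ae ?_
  filter_upwards [hf.coeFn_toLp, hg.coeFn_toLp] with x hfx hgx
  rw [hfx, hgx]

variable (𝕜) in
lemma inner_const_sub_const_integral [IsProbabilityMeasure μ] [NormedAddCommGroup E]
    [InnerProductSpace 𝕜 E] [CompleteSpace E] [NormedSpace ℝ E] (c : E) (f : Lp E 2 μ) :
    inner 𝕜 (Lp.const 2 μ c) (f - Lp.const 2 μ (∫ x, f x ∂μ)) = 0 := by
  have hf : Integrable f μ := (Lp.memLp f).integrable one_le_two
  have hm : Integrable (fun _ : X ↦ ∫ x, f x ∂μ) μ := integrable_const _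
  calc inner 𝕜 (Lp.const 2 μ c) (f - Lp.const 2 μ (∫ x, f x ∂μ))
      = ∫ x, inner 𝕜 c (f x - ∫ y, f y ∂μ) ∂μ := by
        rw [L2.inner_def]
        refine integral_congr_ae ?_
        filter_upwards [Lp.coeFn_const 2 μ c, Lp.coeFn_const 2 μ (∫ x, f x ∂μ),
          Lp.coeFn_sub f (Lp.const 2 μ (∫ x, f x ∂μ))] with x hc hm hsub
        rw [hsub, Pi.sub_apply, hc, hm]
        rfl
    _ = 0 := by
      rw [integral_inner (f := fun x ↦ f x - ∫ y, f y ∂μ) (hf.sub hm), integral_sub hf hm,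
        integral_const, probReal_univ, one_smul, sub_self, inner_zero_right]

theorem tendsto_birkhoffAverage_compMeasurePreserving [IsProbabilityMeasure μ]
    [NormedAddCommGroup E] [InnerProductSpace 𝕜 E] [CompleteSpace E] [NormedSpace ℝ E]
    (hS : Ergodic S μ) (f : Lp E 2 μ) :
    Tendsto (birkhoffAverage 𝕜 (Lp.compMeasurePreserving S hS.toMeasurePreserving) id · f) atTop
      (𝓝 (Lp.const 2 μ (∫ x, f x ∂μ))) := by
  let U : Lp E 2 μ →L[𝕜] Lp E 2 μ :=
    (Lp.compMeasurePreservingₗᵢ 𝕜 S hS.toMeasurePreserving).toContinuousLinearMap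
  have hconst (c : E) : U (Lp.const 2 μ c) = Lp.const 2 μ c := rfl
  have hfixed (w : Lp E 2 μ) (hw : U w = w) : ∃ c, w = Lp.const 2 μ c := by
    obtain ⟨c, hc⟩ := hS.eq_const_of_compMeasurePreserving_eq (congrArg Subtype.val hw)
    exact ⟨c, Subtype.ext hc⟩
  have hproj : (U.eqLocus (1 : Lp E 2 μ →L[𝕜] Lp E 2 μ)).starProjection f =
      Lp.const 2 μ (∫ x, f x ∂μ) := by
    refine Submodule.eq_starProjection_of_mem_orthogonal (hconst _) fun w hw ↦ ?_
    obtain ⟨c, rfl⟩ := hfixed w hw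
    exact inner_const_sub_const_integral 𝕜 c f
  rw [← hproj]
  exact U.tendsto_birkhoffAverage_orthogonalProjection
    (LinearIsometry.norm_toContinuousLinearMap_le _) f

/-- The correlation `∫ f(Sⁿx) · conj g(x) dμ` of `g` with the `n`-th iterate of `f`, that is, the
`L²` inner product `⟪g, f ∘ Sⁿ⟫`. -/
noncomputable def correlation (S : X → X) (μ : Measure X) (g f : X → 𝕜) (n : ℕ) : 𝕜 :=
  ∫ x, f (S^[n] x) * conj (g x) ∂μ

lemma correlation_eq_inner (hS : MeasurePreserving S μ μ) {f g : X → 𝕜} (hg : MemLp g 2 μ)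
    (hf : MemLp f 2 μ) (n : ℕ) :
    correlation S μ g f n =
      inner 𝕜 (hg.toLp g) ((hf.comp_measurePreserving (hS.iterate n)).toLp (f ∘ S^[n])) :=
  (inner_toLp_eq_integral hg (hf.comp_measurePreserving (hS.iterate n))).symm

lemma norm_correlation_le (hS : MeasurePreserving S μ μ) {f g : X → 𝕜} (hg : MemLp g 2 μ)
    (hf : MemLp f 2 μ) (n : ℕ) :
    ‖correlation S μ g f n‖ ≤ ‖hg.toLp g‖ * ‖hf.toLp f‖ := by
  rw [correlation_eq_inner hS hg hf, ← Lp.toLp_compMeasurePreserving hf (hS.iterate n),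
    ← Lp.norm_compMeasurePreserving (hf.toLp f) (hS.iterate n)]
  exact norm_inner_le_norm _ _

theorem tendsto_cesaroMean_correlation [IsProbabilityMeasure μ] (hS : Ergodic S μ) {f g : X → 𝕜}
    (hg : MemLp g 2 μ) (hf : MemLp f 2 μ) :
    Tendsto (cesaroMean 𝕜 (correlation S μ g f)) atTop
      (𝓝 ((∫ x, f x ∂μ) * conj (∫ x, g x ∂μ))) := by
  have hlim := (tendsto_const_nhds (x := hg.toLp g)).inner (𝕜 := 𝕜)
    (tendsto_birkhoffAverage_compMeasurePreserving (𝕜 := 𝕜) hS (hf.toLp f))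
  have hvalue : inner 𝕜 (hg.toLp g) (Lp.const 2 μ (∫ x, hf.toLp f x ∂μ)) =
      (∫ x, f x ∂μ) * conj (∫ x, g x ∂μ) := by
    rw [integral_congr_ae hf.coeFn_toLp]
    refine (inner_toLp_eq_integral hg (memLp_const _)).trans ?_
    simp only [RCLike.inner_apply, integral_const_mul, integral_conj]
  rw [hvalue] at hlim
  refine hlim.congr fun N ↦ ?_
  refine (map_cesaroMean 𝕜 (innerSL 𝕜 (hg.toLp g))
    (fun n ↦ (Lp.compMeasurePreserving S hS.toMeasurePreserving)^[n] (hf.toLp f)) N).trans ?_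
  congr 1
  ext n
  rw [correlation_eq_inner hS.toMeasurePreserving hg hf,
    ← Lp.toLp_compMeasurePreserving hf (hS.iterate n), Lp.compMeasurePreserving_iterate]
  rfl

end Ergodic

section WeaklyMixing

variable {X 𝕜 : Type*} [MeasurableSpace X] [RCLike 𝕜] {μ : Measure X} {T : X → X}

/-- `T` is weakly mixing for `μ` if `T × T` is ergodic for `μ ⊗ μ`. -/
def WeaklyMixing (T : X → X) (μ : Measure X) : Prop :=
  Ergodic (Prod.map T T) (μ.prod μ)

lemma WeaklyMixing.measurePreserving [IsProbabilityMeasure μ] (hT : WeaklyMixing T μ) :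
    MeasurePreserving T μ μ := by
  have hmeas : Measurable T :=
    measurable_fst.comp (hT.measurable.comp (measurable_id.prodMk measurable_id))
  exact measurePreserving_fst.of_semiconj hT.toMeasurePreserving (fun _ ↦ rfl) hmeas

lemma memLp_two_mul_prod {Y : Type*} [MeasurableSpace Y] {ν : Measure Y} [SFinite μ]
    [SFinite ν] {f : X → 𝕜} {g : Y → 𝕜} (hf : MemLp f 2 μ) (hg : MemLp g 2 ν) :
    MemLp (fun p : X × Y ↦ f p.1 * g p.2) 2 (μ.prod ν) := by
  refine (memLp_two_iff_integrable_sq_norm (hf.1.comp_fst.mul hg.1.comp_snd)).2 ?_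
  simpa only [Pi.mul_apply, norm_mul, mul_pow] using
    hf.norm.integrable_sq.mul_prod hg.norm.integrable_sq

lemma correlation_prodMap [SFinite μ] (f g : X → 𝕜) (n : ℕ) :
    correlation (Prod.map T T) (μ.prod μ) (fun p ↦ g p.1 * conj (g p.2))
      (fun p ↦ f p.1 * conj (f p.2)) n = (‖correlation T μ g f n‖ ^ 2 : ℝ) := by
  rw [RCLike.ofReal_pow, ← RCLike.mul_conj, correlation, correlation, ← integral_conj,
    ← integral_prod_mul]
  simp only [Prod.map_iterate, Prod.map_fst, Prod.map_snd, map_mul, RCLike.conj_conj]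
  congr with p
  ring

theorem WeaklyMixing.tendsto_cesaroMean_norm_correlation [IsProbabilityMeasure μ]
    (hT : WeaklyMixing T μ) {f g : X → 𝕜} (hg : MemLp g 2 μ) (hf : MemLp f 2 μ)
    (hf₀ : ∫ x, f x ∂μ = 0) :
    Tendsto (cesaroMean ℝ fun n ↦ ‖correlation T μ g f n‖) atTop (𝓝 0) := by
  refine tendsto_cesaroMean_of_sq ?_
  have hlim := tendsto_cesaroMean_correlation hT (memLp_two_mul_prod hg hg.star)
    (memLp_two_mul_prod hf hf.star)
  have hF : ∫ p, f p.1 * conj (f p.2) ∂(μ.prod μ) = 0 := by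
    rw [integral_prod_mul f fun y ↦ conj (f y), hf₀, zero_mul]
  simp only [Pi.star_apply, RCLike.star_def, hF, zero_mul] at hlim
  have hre := (RCLike.continuous_re.tendsto (0 : 𝕜)).comp hlim
  rw [map_zero] at hre
  refine hre.congr fun N ↦ (map_cesaroMean ℝ (RCLike.re : 𝕜 →+ ℝ) _ N).trans ?_
  simp only [correlation_prodMap, RCLike.ofReal_re]

end WeaklyMixing

section OrbitProd

variable {X M 𝕜 : Type*} [CommMonoid M] [RCLike 𝕜] {k : ℕ}

/-- The product `f₀(x) · f₁(Tⁿx) ⋯ f_{k-1}(T^{(k-1)n}x)` along an arithmetic progression. -/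
def orbitProd (T : X → X) (f : Fin k → X → M) (n : ℕ) (x : X) : M :=
  ∏ i : Fin k, f i (T^[i * n] x)

lemma orbitProd_succ (T : X → X) (f : Fin (k + 1) → X → M) (n : ℕ) (x : X) :
    orbitProd T f n x = f 0 x * orbitProd T (fun i ↦ f i.succ) n (T^[n] x) := by
  simp only [orbitProd, Fin.prod_univ_succ, Fin.val_zero, zero_mul, Function.iterate_zero_apply,
    Fin.val_succ, add_one_mul, Function.iterate_add_apply]

lemma orbitProd_castSucc (T : X → X) (f : Fin (k + 1) → X → M) (n : ℕ) (x : X) :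
    orbitProd T f n x =
      orbitProd T (fun i ↦ f i.castSucc) n x * f (Fin.last k) (T^[k * n] x) := by
  simp only [orbitProd, Fin.prod_univ_castSucc, Fin.val_castSucc, Fin.val_last]

lemma orbitProd_add_mul_conj (T : X → X) (f : Fin k → X → 𝕜) (n h : ℕ) (x : X) :
    orbitProd T f (n + h) (T^[n + h] x) * conj (orbitProd T f n (T^[n] x)) =
      orbitProd T (fun i y ↦ f i (T^[(i + 1) * h] y) * conj (f i y)) n (T^[n] x) := by
  simp only [orbitProd, map_prod, ← Finset.prod_mul_distrib, ← Function.iterate_add_apply]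
  congr! 4
  ring

lemma orbitProd_indicator (T : X → X) (A : Fin k → Set X) (n : ℕ) :
    orbitProd T (fun i ↦ (A i).indicator 1) n =
      (⋂ i : Fin k, T^[i * n] ⁻¹' A i).indicator (1 : X → ℝ) := by
  classical
  ext x
  simp only [orbitProd, Set.indicator_apply, Set.mem_iInter, Set.mem_preimage, Pi.one_apply,
    Finset.prod_ite_zero, Finset.prod_const_one, Finset.mem_univ, true_imp_iff]

variable [MeasurableSpace X] {μ : Measure X} {T : X → X} {f : Fin k → X → 𝕜}

lemma memLp_top_comp_iterate_mul_conj (hT : MeasurePreserving T μ μ) {g : X → 𝕜}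
    (hg : MemLp g ⊤ μ) (n : ℕ) : MemLp (fun x ↦ g (T^[n] x) * conj (g x)) ⊤ μ :=
  hg.star.mul (hg.comp_measurePreserving (hT.iterate n))

lemma memLp_top_orbitProd (hT : MeasurePreserving T μ μ) (hf : ∀ i, MemLp (f i) ⊤ μ) (n : ℕ) :
    MemLp (orbitProd T f n) ⊤ μ := by
  have hprod := MemLp.prod' (s := Finset.univ) fun i _ ↦
    (hf i).comp_measurePreserving (hT.iterate (i * n))
  rwa [ENNReal.inv_top, Finset.sum_const_zero, ENNReal.inv_zero] at hprod

lemma eLpNorm_top_orbitProd_le (hT : MeasurePreserving T μ μ) (f : Fin k → X → 𝕜) (n : ℕ) :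
    eLpNorm (orbitProd T f n) ⊤ μ ≤ ∏ i, eLpNorm (f i) ⊤ μ := by
  simp only [eLpNorm_exponent_top]
  refine eLpNormEssSup_le_of_ae_enorm_bound ?_
  have hbound : ∀ᵐ x ∂μ, ∀ i : Fin k, ‖f i (T^[i * n] x)‖ₑ ≤ eLpNormEssSup (f i) μ :=
    ae_all_iff.2 fun i ↦
      (hT.iterate _).quasiMeasurePreserving.ae (ae_le_eLpNormEssSup (f := f i))
  filter_upwards [hbound] with x hx
  rw [orbitProd, enorm_eq_nnnorm, nnnorm_prod, ENNReal.ofNNReal_finsetProd]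
  exact Finset.prod_le_prod' fun i _ ↦ hx i

lemma integral_orbitProd_indicator (hT : Measurable T) {A : Fin k → Set X}
    (hA : ∀ i, MeasurableSet (A i)) (n : ℕ) :
    ∫ x, orbitProd T (fun i ↦ (A i).indicator (1 : X → ℝ)) n x ∂μ =
      (μ (⋂ i : Fin k, T^[i * n] ⁻¹' A i)).toReal := by
  rw [orbitProd_indicator,
    integral_indicator_one (MeasurableSet.iInter fun i ↦ hT.iterate _ (hA i)), Measure.real]

end OrbitProd

section MultipleMixing

variable {X 𝕜 : Type*} [MeasurableSpace X] [RCLike 𝕜] {μ : Measure X} [IsProbabilityMeasure μ]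
  {T : X → X} {k : ℕ}

lemma memLp_orbitProd_comp_iterate (hT : MeasurePreserving T μ μ) {f : Fin k → X → 𝕜}
    (hf : ∀ i, MemLp (f i) ⊤ μ) (n : ℕ) : MemLp (orbitProd T f n ∘ T^[n]) 2 μ :=
  ((memLp_top_orbitProd hT hf n).comp_measurePreserving (hT.iterate n)).mono_exponent le_top

/-- The function `x ↦ f₀(Tⁿx) · f₁(T²ⁿx) ⋯ f_{k-1}(Tᵏⁿx)` as an element of `L²`. -/
noncomputable def orbitProdLp (hT : MeasurePreserving T μ μ) {f : Fin k → X → 𝕜}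
    (hf : ∀ i, MemLp (f i) ⊤ μ) (n : ℕ) : Lp 𝕜 2 μ :=
  (memLp_orbitProd_comp_iterate hT hf n).toLp (orbitProd T f n ∘ T^[n])

lemma norm_orbitProdLp_le (hT : MeasurePreserving T μ μ) {f : Fin k → X → 𝕜}
    (hf : ∀ i, MemLp (f i) ⊤ μ) (n : ℕ) :
    ‖orbitProdLp hT hf n‖ ≤ (∏ i, eLpNorm (f i) ⊤ μ).toReal := by
  rw [orbitProdLp, Lp.norm_toLp]
  refine ENNReal.toReal_mono (ENNReal.prod_ne_top fun i _ ↦ (hf i).eLpNorm_ne_top) ?_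
  have hmem := memLp_top_orbitProd hT hf n
  calc eLpNorm (orbitProd T f n ∘ T^[n]) 2 μ = eLpNorm (orbitProd T f n) 2 μ :=
        eLpNorm_comp_measurePreserving hmem.1 (hT.iterate n)
    _ ≤ eLpNorm (orbitProd T f n) ⊤ μ := eLpNorm_le_eLpNorm_of_exponent_le le_top hmem.1
    _ ≤ ∏ i, eLpNorm (f i) ⊤ μ := eLpNorm_top_orbitProd_le hT f n

lemma inner_orbitProdLp (hT : MeasurePreserving T μ μ) {f : Fin k → X → 𝕜}
    (hf : ∀ i, MemLp (f i) ⊤ μ) (n h : ℕ) :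
    inner 𝕜 (orbitProdLp hT hf n) (orbitProdLp hT hf (n + h)) =
      ∫ x, orbitProd T (fun i y ↦ f i (T^[(i + 1) * h] y) * conj (f i y)) n x ∂μ := by
  have hmem := memLp_top_orbitProd hT
    (fun i : Fin k ↦ memLp_top_comp_iterate_mul_conj hT (hf i) ((i + 1) * h)) n
  rw [orbitProdLp, orbitProdLp, inner_toLp_eq_integral]
  simp only [RCLike.inner_apply, Function.comp_apply, orbitProd_add_mul_conj]
  have hmap := (hT.iterate n).map_eq
  conv_rhs => rw [← hmap]
  exact (integral_map (hT.iterate n).measurable.aemeasurable (hmap.symm ▸ hmem.1)).symm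

/-- Multiple mixing in the mean along arithmetic progressions: the integrals of
`f₀ · f₁ ∘ Tⁿ ⋯ f_{k-1} ∘ T^{(k-1)n}` have Cesàro limit `∫ f₀ ⋯ ∫ f_{k-1}`. The parameter `k` counts
the functions, so `k - 1` is the number of iterates involved. -/
def MixingOnAverage (𝕜 : Type*) [RCLike 𝕜] (T : X → X) (μ : Measure X) (k : ℕ) : Prop :=
  ∀ f : Fin k → X → 𝕜, (∀ i, MemLp (f i) ⊤ μ) →
    Tendsto (cesaroMean 𝕜 fun n ↦ ∫ x, orbitProd T f n x ∂μ) atTop (𝓝 (∏ i, ∫ x, f i x ∂μ))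

lemma WeaklyMixing.tendsto_cesaroMean_norm_prod_correlation (hT : WeaklyMixing T μ)
    {f : Fin (k + 1) → X → 𝕜} (hf : ∀ i, MemLp (f i) 2 μ) (hlast : ∫ x, f (Fin.last k) x ∂μ = 0) :
    Tendsto (cesaroMean ℝ fun h ↦ ‖∏ i, correlation T μ (f i) (f i) ((i + 1) * h)‖) atTop
      (𝓝 0) := by
  set C : ℝ := ∏ i : Fin k, ‖(hf i.castSucc).toLp (f i.castSucc)‖ ^ 2
  have hbound (h : ℕ) : ‖∏ i, correlation T μ (f i) (f i) ((i + 1) * h)‖ ≤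
      C * ‖correlation T μ (f (Fin.last k)) (f (Fin.last k)) ((k + 1) * h)‖ := by
    rw [Fin.prod_univ_castSucc, norm_mul, norm_prod, Fin.val_last]
    refine mul_le_mul_of_nonneg_right ?_ (norm_nonneg _)
    refine Finset.prod_le_prod (fun _ _ ↦ norm_nonneg _) fun i _ ↦ ?_
    exact (norm_correlation_le hT.measurePreserving (hf _) (hf _) _).trans_eq (sq _).symm
  have hcorr := hT.tendsto_cesaroMean_norm_correlation (hf (Fin.last k)) (hf (Fin.last k)) hlast
  have hlim := (tendsto_cesaroMean_comp_mul (q := k + 1) (fun _ ↦ norm_nonneg _) hcorr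
    k.succ_ne_zero).const_mul C
  simp only [mul_zero, ← cesaroMean_const_mul] at hlim
  exact squeeze_zero (cesaroMean_nonneg fun _ ↦ norm_nonneg _) (cesaroMean_mono hbound) hlim

theorem WeaklyMixing.tendsto_cesaroMean_orbitProdLp (hT : WeaklyMixing T μ)
    (hmix : MixingOnAverage 𝕜 T μ (k + 1)) {f : Fin (k + 1) → X → 𝕜}
    (hf : ∀ i, MemLp (f i) ⊤ μ) (hlast : ∫ x, f (Fin.last k) x ∂μ = 0) :
    Tendsto (cesaroMean 𝕜 (orbitProdLp hT.measurePreserving hf)) atTop (𝓝 0) := by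
  refine tendsto_cesaroMean_zero_of_inner (norm_orbitProdLp_le hT.measurePreserving hf)
    (γ := fun h ↦ ∏ i, correlation T μ (f i) (f i) ((i + 1) * h)) (fun h ↦ ?_)
    (hT.tendsto_cesaroMean_norm_prod_correlation (fun i ↦ (hf i).mono_exponent le_top) hlast)
  simp only [inner_orbitProdLp]
  exact hmix _ fun i ↦ memLp_top_comp_iterate_mul_conj hT.measurePreserving (hf i) _

lemma WeaklyMixing.tendsto_cesaroMean_integral_orbitProd_zero (hT : WeaklyMixing T μ)
    (hmix : MixingOnAverage 𝕜 T μ (k + 1)) {f : Fin (k + 2) → X → 𝕜}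
    (hf : ∀ i, MemLp (f i) ⊤ μ) (hlast : ∫ x, f (Fin.last (k + 1)) x ∂μ = 0) :
    Tendsto (cesaroMean 𝕜 fun n ↦ ∫ x, orbitProd T f n x ∂μ) atTop (𝓝 0) := by
  have hg : MemLp (fun x ↦ conj (f 0 x)) 2 μ := (hf 0).star.mono_exponent le_top
  have hlim := (tendsto_const_nhds (x := hg.toLp _)).inner (𝕜 := 𝕜)
    (hT.tendsto_cesaroMean_orbitProdLp hmix (fun i ↦ hf i.succ) hlast)
  rw [inner_zero_right] at hlim
  refine hlim.congr fun N ↦ (map_cesaroMean 𝕜 (innerSL 𝕜 (hg.toLp _)) _ N).trans ?_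
  congr 1
  ext n
  refine (inner_toLp_eq_integral hg _).trans (integral_congr_ae (.of_forall fun x ↦ ?_))
  simp only [RCLike.inner_apply, RCLike.conj_conj, Function.comp_apply, orbitProd_succ T f,
    mul_comm]

lemma MixingOnAverage.succ_of_zero (hT : MeasurePreserving T μ μ) (hmix : MixingOnAverage 𝕜 T μ k)
    (hzero : ∀ f : Fin (k + 1) → X → 𝕜, (∀ i, MemLp (f i) ⊤ μ) →
      ∫ x, f (Fin.last k) x ∂μ = 0 →
      Tendsto (cesaroMean 𝕜 fun n ↦ ∫ x, orbitProd T f n x ∂μ) atTop (𝓝 0)) :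
    MixingOnAverage 𝕜 T μ (k + 1) := by
  intro f hf
  set c : 𝕜 := ∫ x, f (Fin.last k) x ∂μ
  set f₀ : Fin (k + 1) → X → 𝕜 :=
    Function.update f (Fin.last k) fun x ↦ f (Fin.last k) x - c
  have hf₀_last : f₀ (Fin.last k) = fun x ↦ f (Fin.last k) x - c := Function.update_self ..
  have hf₀_castSucc (i : Fin k) : f₀ i.castSucc = f i.castSucc :=
    Function.update_of_ne (Fin.castSucc_ne_last i) ..
  have hf₀ : ∀ i, MemLp (f₀ i) ⊤ μ :=
    Fin.lastCases (hf₀_last ▸ (hf _).sub (memLp_const c)) fun i ↦ hf₀_castSucc i ▸ hf _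
  have hlast : ∫ x, f₀ (Fin.last k) x ∂μ = 0 := by
    rw [hf₀_last, integral_sub ((hf _).integrable le_top) (integrable_const c), integral_const,
      probReal_univ, one_smul, sub_self]
  have hsplit (n : ℕ) : ∫ x, orbitProd T f n x ∂μ =
      c * ∫ x, orbitProd T (fun i ↦ f i.castSucc) n x ∂μ + ∫ x, orbitProd T f₀ n x ∂μ := by
    rw [← integral_const_mul, ← integral_add]
    · refine integral_congr_ae (.of_forall fun x ↦ ?_)
      simp only [orbitProd_castSucc, hf₀_last, hf₀_castSucc]
      ring
    · exact ((memLp_top_orbitProd hT (fun i ↦ hf i.castSucc) n).integrable le_top).const_mul c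
    · exact (memLp_top_orbitProd hT hf₀ n).integrable le_top
  have hlim := ((hmix _ fun i ↦ hf i.castSucc).const_mul c).add (hzero f₀ hf₀ hlast)
  rw [add_zero, mul_comm, ← Fin.prod_univ_castSucc fun i ↦ ∫ x, f i x ∂μ] at hlim
  refine hlim.congr fun N ↦ ?_
  simp only [hsplit, cesaroMean_add, cesaroMean_const_mul]

theorem WeaklyMixing.mixingOnAverage (hT : WeaklyMixing T μ) : ∀ k, MixingOnAverage 𝕜 T μ k
  | 0 => fun f _ ↦ by simpa [orbitProd] using tendsto_cesaroMean_const (𝕜 := 𝕜) (1 : 𝕜)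
  | 1 => fun f _ ↦ by
    simpa [orbitProd] using tendsto_cesaroMean_const (𝕜 := 𝕜) (∫ x, f 0 x ∂μ)
  | k + 2 => (hT.mixingOnAverage (k + 1)).succ_of_zero hT.measurePreserving fun _ ↦
      hT.tendsto_cesaroMean_integral_orbitProd_zero (hT.mixingOnAverage (k + 1))

end MultipleMixing

lemma one_div_mul_sum_Icc_eq_cesaroMean (u : ℕ → ℝ) (N : ℕ) :
    1 / (N : ℝ) * ∑ n ∈ Finset.Icc 1 N, u n = cesaroMean ℝ (fun n ↦ u (n + 1)) N := by
  rw [cesaroMean, smul_eq_mul, one_div, Finset.range_eq_Ico, Finset.sum_Ico_add' u 0 N 1, zero_add,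
    Finset.Ico_add_one_right_eq_Icc]

theorem furstenberg_weakly_mixing_multiple_recurrence_general
    {X : Type*} [MeasurableSpace X] (μ : Measure X) [IsProbabilityMeasure μ] (T : X → X)
    (hT : WeaklyMixing T μ) (k : ℕ) (A : Fin (k + 1) → Set X) (hA : ∀ i, MeasurableSet (A i)) :
    Tendsto
      (fun n : ℕ ↦
        (1 / (n : ℝ)) *
          ∑ j ∈ Finset.Icc 1 n, (μ (⋂ i : Fin (k + 1), (fun x ↦ T^[(i : ℕ) * j] x) ⁻¹' A i)).toReal)
      atTop (𝓝 (∏ i : Fin (k + 1), (μ (A i)).toReal)) := by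
  simp only [one_div_mul_sum_Icc_eq_cesaroMean]
  have hmix := hT.mixingOnAverage (k + 1) (fun i ↦ (A i).indicator (1 : X → ℝ))
    fun i ↦ memLp_indicator_const ⊤ (hA i) 1 (.inr (measure_ne_top μ _))
  simp only [integral_orbitProd_indicator hT.measurePreserving.measurable hA,
    integral_indicator_one (hA _), Measure.real] at hmix
  refine tendsto_cesaroMean_shift (C := 1) (fun n ↦ ?_) hmix 1
  rw [Real.norm_of_nonneg ENNReal.toReal_nonneg]
  exact measureReal_le_one

/-- Furstenberg's multiple recurrence theorem for weakly mixing transformations: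
the Cesàro averages of `μ(A₀ ∩ T^{-j}A₁ ∩ ⋯ ∩ T^{-kj}A_k)` converge to
`μ(A₀)μ(A₁)⋯μ(A_k)`. -/
theorem furstenberg_weakly_mixing_multiple_recurrence
    {X : Type*} [MeasurableSpace X]
    (μ : Measure X) [IsProbabilityMeasure μ]
    (T : X ≃ᵐ X) (hT : MeasurePreserving T μ μ)
    (hwm : Ergodic (Prod.map T T) (μ.prod μ))
    (k : ℕ) (hk : 1 ≤ k)
    (A : Fin (k + 1) → Set X) (hA : ∀ i, MeasurableSet (A i)) :
    Tendsto
      (fun n : ℕ =>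
        (1 / (n : ℝ)) *
          ∑ j ∈ Finset.Icc 1 n,
            (μ (⋂ i : Fin (k + 1), (fun x => T^[(i : ℕ) * j] x) ⁻¹' A i)).toReal)
      atTop (nhds (∏ i : Fin (k + 1), (μ (A i)).toReal)) :=
  furstenberg_weakly_mixing_multiple_recurrence_general μ T hwm k A hA
end

section
/- Ornstein's criterion for mixing: Let T be an invertible measure-preserving transformation of a probability space (X, 𝒜, μ). Then T is strongly mixing (i.e., for all measurable A, B ⊆ X, μ(A ∩ T^{−n}B) → μ(A)μ(B) as n → ∞) if and only if T is weakly mixing and there exists a real number θ > 0 such that for all measurable A, B ⊆ X, limsup_{n→∞} μ(A ∩ T^{−n}B) ≤ θ·μ(A)·μ(B). -/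
open MeasureTheory Filter

/-!
Suppose `T × T` is ergodic and mixing is dominated by `θ`. By the mean ergodic theorem the
`T × T`-Birkhoff averages `S_N` of the indicator of `A × B` are close to `c = μ(A) μ(B)` in
`L¹(μ ⊗ μ)`. The image `ρ_n` of `μ` on the graph of `T^n` is `T × T`-invariant, so
`ρ_n(A × B) - c` is the `ρ_n`-integral of `S_N - c`. As `|S_N - c|` is a nonnegative combination of
indicators of finitely many rectangles, its `ρ_n`-integral is asymptotically at most `θ` times its
small `μ ⊗ μ`-integral; hence `μ(A ∩ T⁻ⁿ B) = ρ_n(A × B)` tends to `c`.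

Conversely, mixing passes from `T` to `T × T`, because it can be tested on rectangles, and a
mixing map is ergodic.
-/

open scoped Topology

section MeanErgodic

variable {Z E : Type*} [MeasurableSpace Z] [NormedAddCommGroup E] {ν : Measure Z} {τ : Z → Z}
  {f : Z → E}

theorem memLp_birkhoffSum {p : ENNReal} (hτ : MeasurePreserving τ ν ν) (hf : MemLp f p ν) (n : ℕ) :
    MemLp (birkhoffSum τ f n) p ν :=
  memLp_finsetSum _ fun k _ ↦ hf.comp_measurePreserving (hτ.iterate k)

theorem memLp_birkhoffAverage [NormedSpace ℝ E] {p : ENNReal} (hτ : MeasurePreserving τ ν ν)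
    (hf : MemLp f p ν) (n : ℕ) : MemLp (birkhoffAverage ℝ τ f n) p ν :=
  (memLp_birkhoffSum hτ hf n).const_smul _

theorem birkhoffSum_compMeasurePreserving_toLp {p : ENNReal} (hτ : MeasurePreserving τ ν ν)
    (hf : MemLp f p ν) (n : ℕ) :
    birkhoffSum (Lp.compMeasurePreserving τ hτ) id n (hf.toLp f) =
      (memLp_birkhoffSum hτ hf n).toLp (birkhoffSum τ f n) := by
  induction n with
  | zero => rfl
  | succ n ih =>
    rw [birkhoffSum_succ, ih, id, Lp.compMeasurePreserving_iterate, Lp.toLp_compMeasurePreserving,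
      ← MemLp.toLp_add]
    exact MemLp.toLp_congr _ _ (ae_of_all _ fun z ↦ (birkhoffSum_succ τ f n z).symm)

theorem birkhoffAverage_compMeasurePreserving_toLp [NormedSpace ℝ E] {p : ENNReal}
    (hτ : MeasurePreserving τ ν ν) (hf : MemLp f p ν) (n : ℕ) :
    birkhoffAverage ℝ (Lp.compMeasurePreserving τ hτ) id n (hf.toLp f) =
      (memLp_birkhoffAverage hτ hf n).toLp (birkhoffAverage ℝ τ f n) := by
  rw [birkhoffAverage, birkhoffSum_compMeasurePreserving_toLp]
  rfl

theorem integral_birkhoffAverage [NormedSpace ℝ E] (hτ : MeasurePreserving τ ν ν)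
    (hf : Integrable f ν) {n : ℕ} (hn : n ≠ 0) :
    ∫ z, birkhoffAverage ℝ τ f n z ∂ν = ∫ z, f z ∂ν := by
  have integral_iterate (k : ℕ) : ∫ z, f (τ^[k] z) ∂ν = ∫ z, f z ∂ν := by
    have hk := hτ.iterate k
    rw [← integral_map hk.aemeasurable (by rw [hk.map_eq]; exact hf.aestronglyMeasurable),
      hk.map_eq]
  have integrable_iterate (k : ℕ) : Integrable (fun z ↦ f (τ^[k] z)) ν :=
    (hτ.iterate k).integrable_comp_of_integrable hf
  simp only [birkhoffAverage, birkhoffSum]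
  rw [integral_smul, integral_finsetSum _ fun k _ ↦ integrable_iterate k]
  simp only [integral_iterate, Finset.sum_const, Finset.card_range, ← Nat.cast_smul_eq_nsmul ℝ]
  rw [inv_smul_smul₀ (Nat.cast_ne_zero.2 hn)]

theorem tendsto_eLpNorm_zero_of_exponent_le [IsProbabilityMeasure ν] {ι : Type*} {l : Filter ι}
    {F : ι → Z → E} {p q : ENNReal} (hpq : p ≤ q) (hF : ∀ i, AEStronglyMeasurable (F i) ν)
    (h : Tendsto (fun i ↦ eLpNorm (F i) q ν) l (𝓝 0)) :
    Tendsto (fun i ↦ eLpNorm (F i) p ν) l (𝓝 0) :=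
  tendsto_of_tendsto_of_tendsto_of_le_of_le tendsto_const_nhds h (fun _ ↦ zero_le)
    fun i ↦ eLpNorm_le_eLpNorm_of_exponent_le hpq (hF i)

variable [InnerProductSpace ℝ E] [CompleteSpace E] [IsProbabilityMeasure ν]

theorem exists_tendsto_eLpNorm_birkhoffAverage_sub_const (hτ : Ergodic τ ν) (hf : MemLp f 2 ν) :
    ∃ c : E, Tendsto (fun n ↦ eLpNorm (birkhoffAverage ℝ τ f n - Function.const Z c) 2 ν) atTop
      (𝓝 0) := by
  have hm := hτ.toMeasurePreserving
  let U : Lp E 2 ν →L[ℝ] Lp E 2 ν :=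
    (Lp.compMeasurePreservingₗᵢ ℝ (E := E) (p := 2) τ hm).toContinuousLinearMap
  obtain ⟨g, hUg, hg⟩ : ∃ g : Lp E 2 ν, U g = g ∧
      Tendsto (birkhoffAverage ℝ U id · (hf.toLp f)) atTop (𝓝 g) :=
    ⟨_, ((U.eqLocus (1 : Lp E 2 ν →L[ℝ] Lp E 2 ν)).orthogonalProjectionOnto (hf.toLp f)).2,
      U.tendsto_birkhoffAverage_orthogonalProjection
        (LinearIsometry.norm_toContinuousLinearMap_le _) _⟩
  have g_invariant : g ∘ τ =ᵐ[ν] g := by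
    have := (Lp.coeFn_compMeasurePreserving g hm).symm
    rwa [show Lp.compMeasurePreserving τ hm g = g from hUg] at this
  obtain ⟨c, hc⟩ := hτ.ae_eq_const_of_ae_eq_comp_ae (Lp.aestronglyMeasurable g) g_invariant
  have g_eq : g = (memLp_const c).toLp (Function.const Z c) :=
    Lp.ext (hc.trans (MemLp.coeFn_toLp _).symm)
  refine ⟨c, (Lp.tendsto_Lp_iff_tendsto_eLpNorm'' _ (memLp_birkhoffAverage hm hf) _
    (memLp_const c)).1 ?_⟩
  exact (g_eq ▸ hg).congr (birkhoffAverage_compMeasurePreserving_toLp hm hf)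

theorem tendsto_eLpNorm_birkhoffAverage_sub_integral (hτ : Ergodic τ ν) (hf : MemLp f 2 ν) :
    Tendsto (fun n ↦ eLpNorm (birkhoffAverage ℝ τ f n - Function.const Z (∫ z, f z ∂ν)) 2 ν) atTop
      (𝓝 0) := by
  have hm := hτ.toMeasurePreserving
  obtain ⟨c, hc⟩ := exists_tendsto_eLpNorm_birkhoffAverage_sub_const hτ hf
  have average_memLp := memLp_birkhoffAverage hm hf
  have tendsto_integral : Tendsto (fun n ↦ ∫ z, birkhoffAverage ℝ τ f n z ∂ν) atTop (𝓝 c) := by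
    simpa using tendsto_integral_of_L1' (Function.const Z c) (integrable_const c).1
      (Eventually.of_forall fun n ↦ (average_memLp n).integrable one_le_two)
      (tendsto_eLpNorm_zero_of_exponent_le one_le_two
        (fun n ↦ ((average_memLp n).sub (memLp_const c)).1) hc)
  have integral_eq : ∫ z, f z ∂ν = c :=
    tendsto_nhds_unique (tendsto_const_nhds.congr' <| (eventually_ne_atTop 0).mono fun n hn ↦
      (integral_birkhoffAverage hm (hf.integrable one_le_two) hn).symm) tendsto_integral
  rwa [integral_eq]

theorem tendsto_integral_norm_birkhoffAverage_sub_integral (hτ : Ergodic τ ν)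
    (hf : MemLp f 2 ν) :
    Tendsto (fun n ↦ ∫ z, ‖birkhoffAverage ℝ τ f n z - ∫ z, f z ∂ν‖ ∂ν) atTop (𝓝 0) := by
  have memLp_sub (n : ℕ) :=
    (memLp_birkhoffAverage hτ.toMeasurePreserving hf n).sub (memLp_const (∫ z, f z ∂ν))
  have tendsto_L1 := tendsto_eLpNorm_zero_of_exponent_le one_le_two (fun n ↦ (memLp_sub n).1)
    (tendsto_eLpNorm_birkhoffAverage_sub_integral hτ hf)
  refine ((ENNReal.tendsto_toReal ENNReal.zero_ne_top).comp tendsto_L1).congr fun n ↦ ?_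
  rw [Function.comp_apply, eLpNorm_one_eq_lintegral_enorm,
    ← integral_norm_eq_lintegral_enorm (memLp_sub n).1]
  rfl

end MeanErgodic

section Itinerary

/-- The `A`-name of length `N` of a point: at which of the times `0, …, N - 1` its orbit visits `A`.
It reduces statements on finitely many iterates to a finite measurable partition. -/
def itinerary {X : Type*} (T : X → X) (A : Set X) (N : ℕ) (x : X) : Fin N → Prop :=
  fun k ↦ T^[k] x ∈ A

theorem measurable_itinerary {X : Type*} [MeasurableSpace X] {T : X → X} {A : Set X}
    (hT : Measurable T) (hA : MeasurableSet A) (N : ℕ) : Measurable (itinerary T A N) :=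
  measurable_pi_lambda _ fun k ↦ measurableSet_setOfPred.1 (hA.preimage (hT.iterate k))

theorem exists_birkhoffAverage_indicator_prod_eq_comp_itinerary {X Y : Type*} (S : X → X)
    (T : Y → Y) (A : Set X) (B : Set Y) (N : ℕ) :
    ∃ h : (Fin N → Prop) × (Fin N → Prop) → ℝ, ∀ z,
      birkhoffAverage ℝ (Prod.map S T) ((A ×ˢ B).indicator 1) N z =
        h (Prod.map (itinerary S A N) (itinerary T B N) z) := by
  refine ⟨fun p ↦ (N : ℝ)⁻¹ • ∑ k, {j | p.1 j ∧ p.2 j}.indicator 1 k, fun z ↦ ?_⟩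
  simp only [birkhoffAverage, birkhoffSum, Finset.sum_range, Prod.map_iterate]
  rfl

end Itinerary

section AsymptoticDomination

variable {ι : Type*} {l : Filter ι} {θ c : ℝ}

theorem eventually_integral_lt_of_limsup_singleton_le {K : Type*} [Finite K] [MeasurableSpace K]
    [MeasurableSingletonClass K] {ρ : ι → Measure K} [∀ i, IsProbabilityMeasure (ρ i)]
    {ν : Measure K} [IsFiniteMeasure ν]
    (hθ : ∀ k, limsup (fun i ↦ (ρ i).real {k}) l ≤ θ * ν.real {k})
    {h : K → ℝ} (h_nonneg : 0 ≤ h) (hc : θ * ∫ k, h k ∂ν < c) :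
    ∀ᶠ i in l, ∫ k, h k ∂ρ i < c := by
  have := Fintype.ofFinite K
  have tendsto_max (k : K) :
      Tendsto (fun i ↦ max ((ρ i).real {k}) (θ * ν.real {k})) l (𝓝 (θ * ν.real {k})) := by
    refine tendsto_order.2 ⟨fun a ha ↦ Eventually.of_forall fun i ↦ lt_max_of_lt_right ha,
      fun a ha ↦ ?_⟩
    have bounded : IsBoundedUnder (· ≤ ·) l fun i ↦ (ρ i).real {k} :=
      isBoundedUnder_of ⟨1, fun i ↦ measureReal_le_one⟩
    exact (eventually_lt_of_limsup_lt ((hθ k).trans_lt ha) bounded).mono fun i hi ↦ max_lt hi ha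
  have tendsto_sum : Tendsto (fun i ↦ ∑ k, max ((ρ i).real {k}) (θ * ν.real {k}) * h k) l
      (𝓝 (θ * ∫ k, h k ∂ν)) := by
    simp only [integral_fintype Integrable.of_finite, smul_eq_mul, Finset.mul_sum, ← mul_assoc]
    exact tendsto_finsetSum _ fun k _ ↦ (tendsto_max k).mul_const _
  filter_upwards [tendsto_sum.eventually_lt_const hc] with i hi
  rw [integral_fintype Integrable.of_finite]
  exact (Finset.sum_le_sum fun k _ ↦
    mul_le_mul_of_nonneg_right (le_max_left _ _) (h_nonneg k)).trans_lt hi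

variable {X Y : Type*} [MeasurableSpace X] [MeasurableSpace Y] {ρ : ι → Measure (X × Y)}
  [∀ i, IsProbabilityMeasure (ρ i)] {ν : Measure (X × Y)}

theorem eventually_integral_comp_prodMap_lt [IsFiniteMeasure ν]
    (hθ : ∀ (A : Set X) (B : Set Y), MeasurableSet A → MeasurableSet B →
      limsup (fun i ↦ (ρ i).real (A ×ˢ B)) l ≤ θ * ν.real (A ×ˢ B))
    {K L : Type*} [Finite K] [MeasurableSpace K] [MeasurableSingletonClass K]
    [Finite L] [MeasurableSpace L] [MeasurableSingletonClass L]
    {P : X → K} (hP : Measurable P) {Q : Y → L} (hQ : Measurable Q)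
    {h : K × L → ℝ} (h_nonneg : 0 ≤ h) (hc : θ * ∫ z, h (Prod.map P Q z) ∂ν < c) :
    ∀ᶠ i in l, ∫ z, h (Prod.map P Q z) ∂ρ i < c := by
  have hPQ : Measurable (Prod.map P Q) := hP.prodMap hQ
  have (i : ι) : IsProbabilityMeasure ((ρ i).map (Prod.map P Q)) :=
    Measure.isProbabilityMeasure_map hPQ.aemeasurable
  have integral_comp (m : Measure (X × Y)) :
      ∫ z, h (Prod.map P Q z) ∂m = ∫ k, h k ∂m.map (Prod.map P Q) :=
    (integral_map hPQ.aemeasurable Measurable.of_discrete.aestronglyMeasurable).symm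
  have preimage_singleton (k : K × L) : Prod.map P Q ⁻¹' {k} = (P ⁻¹' {k.1}) ×ˢ (Q ⁻¹' {k.2}) := by
    rw [← Set.singleton_prod_singleton, Set.preimage_prod_map_prod]
  simp only [integral_comp] at hc ⊢
  refine eventually_integral_lt_of_limsup_singleton_le (fun k ↦ ?_) h_nonneg hc
  simp only [map_measureReal_apply hPQ (measurableSet_singleton k), preimage_singleton]
  exact hθ _ _ (hP (measurableSet_singleton _)) (hQ (measurableSet_singleton _))

variable {S : X → X} {T : Y → Y} {A : Set X} {B : Set Y}

theorem tendsto_measureReal_prod_of_limsup_le [IsProbabilityMeasure ν]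
    (hS : Measurable S) (hT : Measurable T)
    (hρ : ∀ i, MeasurePreserving (Prod.map S T) (ρ i) (ρ i)) (hν : Ergodic (Prod.map S T) ν)
    (hθ : ∀ (A : Set X) (B : Set Y), MeasurableSet A → MeasurableSet B →
      limsup (fun i ↦ (ρ i).real (A ×ˢ B)) l ≤ θ * ν.real (A ×ˢ B))
    (hA : MeasurableSet A) (hB : MeasurableSet B) :
    Tendsto (fun i ↦ (ρ i).real (A ×ˢ B)) l (𝓝 (ν.real (A ×ˢ B))) := by
  set f : X × Y → ℝ := (A ×ˢ B).indicator 1 with hf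
  have memLp_f (m : Measure (X × Y)) [IsFiniteMeasure m] : MemLp f 2 m :=
    (memLp_const 1).indicator (hA.prod hB)
  have integral_f (m : Measure (X × Y)) : ∫ z, f z ∂m = m.real (A ×ˢ B) :=
    integral_indicator_one (hA.prod hB)
  set c := ν.real (A ×ˢ B)
  rw [Metric.tendsto_nhds]
  intro ε hε
  obtain ⟨N, hN, hNε⟩ : ∃ N ≠ 0, θ * ∫ z, |birkhoffAverage ℝ (Prod.map S T) f N z - c| ∂ν < ε := by
    have tendsto_L1 := tendsto_integral_norm_birkhoffAverage_sub_integral hν (memLp_f ν)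
    simp only [integral_f, Real.norm_eq_abs] at tendsto_L1
    exact ((eventually_ne_atTop 0).and ((tendsto_L1.const_mul θ).eventually_lt_const
      (by rwa [mul_zero]))).exists
  obtain ⟨h, hh⟩ := exists_birkhoffAverage_indicator_prod_eq_comp_itinerary S T A B N
  have deviation_lt : ∀ᶠ i in l,
      ∫ z, |birkhoffAverage ℝ (Prod.map S T) f N z - c| ∂ρ i < ε := by
    simp only [hf, hh] at hNε ⊢
    exact eventually_integral_comp_prodMap_lt hθ (measurable_itinerary hS hA N)
      (measurable_itinerary hT hB N) (h := fun p ↦ |h p - c|) (fun p ↦ abs_nonneg _) hNε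
  filter_upwards [deviation_lt] with i hi
  calc dist ((ρ i).real (A ×ˢ B)) c
      = |∫ z, (birkhoffAverage ℝ (Prod.map S T) f N z - c) ∂ρ i| := by
        rw [integral_sub ((memLp_birkhoffAverage (hρ i) (memLp_f _) N).integrable one_le_two)
          (integrable_const c), integral_birkhoffAverage (hρ i)
          ((memLp_f _).integrable one_le_two) hN, integral_f, integral_const, probReal_univ,
          one_smul, Real.dist_eq]
    _ ≤ ∫ z, |birkhoffAverage ℝ (Prod.map S T) f N z - c| ∂ρ i := abs_integral_le_integral_abs
    _ < ε := hi

end AsymptoticDomination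

section GraphJoining

variable {X : Type*} [MeasurableSpace X] {μ : Measure X} {S T : X → X}

/-- The self-joining of `μ` carried by the graph of `S`. It turns the correlation `μ (A ∩ S⁻¹ B)`
into the measure of the rectangle `A × B`. For non-measurable `S` it is the zero measure. -/
noncomputable def graphJoining (μ : Measure X) (S : X → X) : Measure (X × X) :=
  μ.map fun x ↦ (x, S x)

theorem isProbabilityMeasure_graphJoining [IsProbabilityMeasure μ] (hS : Measurable S) :
    IsProbabilityMeasure (graphJoining μ S) :=
  Measure.isProbabilityMeasure_map (measurable_id.prodMk hS).aemeasurable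

theorem graphJoining_real_prod (hS : Measurable S) {A B : Set X} (hA : MeasurableSet A)
    (hB : MeasurableSet B) : (graphJoining μ S).real (A ×ˢ B) = μ.real (A ∩ S ⁻¹' B) :=
  map_measureReal_apply (measurable_id.prodMk hS) (hA.prod hB)

theorem measurePreserving_prodMap_graphJoining (hT : MeasurePreserving T μ μ) (hS : Measurable S)
    (hTS : Function.Commute T S) :
    MeasurePreserving (Prod.map T T) (graphJoining μ S) (graphJoining μ S) :=
  (Measurable.measurePreserving (measurable_id.prodMk hS) μ).of_semiconj hT
    (fun x ↦ Prod.ext rfl (hTS x).symm) (hT.measurable.prodMap hT.measurable)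

end GraphJoining

section PiSystem

theorem hasSum_measureReal_iUnion {Z : Type*} [MeasurableSpace Z] (ν : Measure Z)
    [IsFiniteMeasure ν] {s : ℕ → Set Z} (hs : ∀ k, MeasurableSet (s k))
    (hd : Pairwise (Function.onFun Disjoint s)) :
    HasSum (fun k ↦ ν.real (s k)) (ν.real (⋃ k, s k)) := by
  simpa only [Measure.toSignedMeasure_apply_measurable, hs, MeasurableSet.iUnion hs] using
    ν.toSignedMeasure.m_iUnion hs hd

theorem tendsto_measureReal_of_isPiSystem {ι Z : Type*} [m : MeasurableSpace Z] {l : Filter ι}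
    {ρ : ι → Measure Z} {ν : Measure Z} [IsFiniteMeasure ν] {c : ℝ} (hρν : ∀ i, ρ i ≤ ν)
    {C : Set (Set Z)} (hC : m = MeasurableSpace.generateFrom C) (hpi : IsPiSystem C)
    (h_univ : Tendsto (fun i ↦ (ρ i).real Set.univ) l (𝓝 (c * ν.real Set.univ)))
    (h_basic : ∀ s ∈ C, Tendsto (fun i ↦ (ρ i).real s) l (𝓝 (c * ν.real s)))
    {s : Set Z} (hs : MeasurableSet s) :
    Tendsto (fun i ↦ (ρ i).real s) l (𝓝 (c * ν.real s)) := by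
  have (i : ι) : IsFiniteMeasure (ρ i) := isFiniteMeasure_of_le ν (hρν i)
  induction s, hs using MeasurableSpace.induction_on_inter hC hpi with
  | empty => simp only [measureReal_empty, mul_zero, tendsto_const_nhds]
  | basic t ht => exact h_basic t ht
  | compl t ht ih =>
    simp only [measureReal_compl ht, mul_sub]
    exact h_univ.sub ih
  | iUnion t ht_disj ht ih =>
    simp only [← (hasSum_measureReal_iUnion _ ht ht_disj).tsum_eq, ← tsum_mul_left]
    refine tendsto_tsum_of_dominated_convergence
      (hasSum_measureReal_iUnion ν ht ht_disj).summable ih (Eventually.of_forall fun i k ↦ ?_)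
    rw [Real.norm_of_nonneg measureReal_nonneg]
    exact ENNReal.toReal_mono (measure_ne_top ν _) (hρν i _)

theorem tendsto_measureReal_inter_preimage_of_isPiSystem {ι X Z : Type*} [MeasurableSpace X]
    [m : MeasurableSpace Z] {l : Filter ι} {μ : Measure X} {ν : Measure Z} [IsProbabilityMeasure ν]
    {S : ι → X → Z} (hS : ∀ i, MeasurePreserving (S i) μ ν) {C : Set (Set Z)}
    (hC : m = MeasurableSpace.generateFrom C) (hpi : IsPiSystem C) {A : Set X}
    (h : ∀ B ∈ C, Tendsto (fun i ↦ μ.real (A ∩ S i ⁻¹' B)) l (𝓝 (μ.real A * ν.real B)))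
    {B : Set Z} (hB : MeasurableSet B) :
    Tendsto (fun i ↦ μ.real (A ∩ S i ⁻¹' B)) l (𝓝 (μ.real A * ν.real B)) := by
  have map_restrict_apply {s : Set Z} (hs : MeasurableSet s) (i : ι) :
      ((μ.restrict A).map (S i)).real s = μ.real (A ∩ S i ⁻¹' s) := by
    rw [map_measureReal_apply (hS i).measurable hs,
      measureReal_restrict_apply ((hS i).measurable hs), Set.inter_comm]
  have map_restrict_le (i : ι) : (μ.restrict A).map (S i) ≤ ν :=
    (Measure.map_mono Measure.restrict_le_self (hS i).measurable).trans_eq (hS i).map_eq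
  simp only [← map_restrict_apply hB]
  refine tendsto_measureReal_of_isPiSystem map_restrict_le hC hpi ?_ (fun s hs ↦ ?_) hB
  · simp only [map_restrict_apply .univ, Set.preimage_univ, Set.inter_univ, probReal_univ, mul_one,
      tendsto_const_nhds]
  · simp only [map_restrict_apply (hC ▸ MeasurableSpace.measurableSet_generateFrom hs)]
    exact h s hs

end PiSystem

section StronglyMixing

/-- A measure-preserving map is strongly mixing if it decorrelates any two events asymptotically. -/
structure StronglyMixing {X : Type*} [MeasurableSpace X] (T : X → X) (μ : Measure X) : Prop
    extends MeasurePreserving T μ μ where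
  tendsto_measureReal_inter_preimage : ∀ A B : Set X, MeasurableSet A → MeasurableSet B →
    Tendsto (fun n : ℕ ↦ μ.real (A ∩ T^[n] ⁻¹' B)) atTop (𝓝 (μ.real A * μ.real B))

variable {X Y : Type*} [mX : MeasurableSpace X] [MeasurableSpace Y] {μ : Measure X}
  [IsProbabilityMeasure μ] {T : X → X}

theorem stronglyMixing_of_ergodic_prodMap_of_limsup_le (hT : MeasurePreserving T μ μ)
    (hTT : Ergodic (Prod.map T T) (μ.prod μ)) {θ : ℝ}
    (hθ : ∀ A B : Set X, MeasurableSet A → MeasurableSet B →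
      limsup (fun n : ℕ ↦ μ.real (A ∩ T^[n] ⁻¹' B)) atTop ≤ θ * μ.real A * μ.real B) :
    StronglyMixing T μ := by
  refine ⟨hT, fun A B hA hB ↦ ?_⟩
  have measurable_iterate (n : ℕ) : Measurable T^[n] := hT.measurable.iterate n
  have (n : ℕ) : IsProbabilityMeasure (graphJoining μ T^[n]) :=
    isProbabilityMeasure_graphJoining (measurable_iterate n)
  have graphJoining_prod {A B : Set X} (hA : MeasurableSet A) (hB : MeasurableSet B) :
      (fun n : ℕ ↦ (graphJoining μ T^[n]).real (A ×ˢ B)) = fun n ↦ μ.real (A ∩ T^[n] ⁻¹' B) :=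
    funext fun n ↦ graphJoining_real_prod (measurable_iterate n) hA hB
  rw [← graphJoining_prod hA hB, ← measureReal_prod_prod]
  refine tendsto_measureReal_prod_of_limsup_le hT.measurable hT.measurable
    (fun n ↦ measurePreserving_prodMap_graphJoining hT (measurable_iterate n)
      (Function.Commute.self_iterate T n)) hTT (θ := θ) (fun A B hA hB ↦ ?_) hA hB
  rw [graphJoining_prod hA hB, measureReal_prod_prod, ← mul_assoc]
  exact hθ A B hA hB

theorem stronglyMixing_of_isPiSystem (hT : MeasurePreserving T μ μ) {C : Set (Set X)}
    (hC : mX = MeasurableSpace.generateFrom C) (hpi : IsPiSystem C)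
    (h : ∀ A ∈ C, ∀ B ∈ C,
      Tendsto (fun n : ℕ ↦ μ.real (A ∩ T^[n] ⁻¹' B)) atTop (𝓝 (μ.real A * μ.real B))) :
    StronglyMixing T μ := by
  refine ⟨hT, fun A B hA hB ↦ ?_⟩
  have restrict_apply {s : Set X} (hs : MeasurableSet s) (n : ℕ) :
      (μ.restrict (T^[n] ⁻¹' B)).real s = μ.real (s ∩ T^[n] ⁻¹' B) :=
    measureReal_restrict_apply hs
  rw [mul_comm]
  simp only [← restrict_apply hA]
  refine tendsto_measureReal_of_isPiSystem (fun n ↦ Measure.restrict_le_self) hC hpi ?_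
    (fun s hs ↦ ?_) hA
  · simp only [restrict_apply .univ, Set.univ_inter, probReal_univ, mul_one,
      (hT.iterate _).measureReal_preimage hB.nullMeasurableSet, tendsto_const_nhds]
  · simp only [restrict_apply (hC ▸ MeasurableSpace.measurableSet_generateFrom hs)]
    rw [mul_comm]
    exact tendsto_measureReal_inter_preimage_of_isPiSystem hT.iterate hC hpi (h s hs) hB

namespace StronglyMixing

theorem prodMap {ν : Measure Y} {S : Y → Y} [IsProbabilityMeasure ν] (hT : StronglyMixing T μ)
    (hS : StronglyMixing S ν) : StronglyMixing (Prod.map T S) (μ.prod ν) := by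
  refine stronglyMixing_of_isPiSystem
    (hT.toMeasurePreserving.prod hS.toMeasurePreserving) generateFrom_prod.symm isPiSystem_prod ?_
  rintro _ ⟨A, hA : MeasurableSet A, B, hB : MeasurableSet B, rfl⟩
    _ ⟨A', hA' : MeasurableSet A', B', hB' : MeasurableSet B', rfl⟩
  have correlation_prod (n : ℕ) :
      (μ.prod ν).real (A ×ˢ B ∩ (Prod.map T S)^[n] ⁻¹' A' ×ˢ B') =
        μ.real (A ∩ T^[n] ⁻¹' A') * ν.real (B ∩ S^[n] ⁻¹' B') := by
    rw [Prod.map_iterate, Set.preimage_prod_map_prod, Set.prod_inter_prod, measureReal_prod_prod]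
  simp only [correlation_prod, measureReal_prod_prod]
  rw [mul_mul_mul_comm]
  exact (hT.tendsto_measureReal_inter_preimage A A' hA hA').mul
    (hS.tendsto_measureReal_inter_preimage B B' hB hB')

theorem ergodic (hT : StronglyMixing T μ) : Ergodic T μ := by
  refine ⟨hT.toMeasurePreserving, ⟨fun s hs hTs ↦ ?_⟩⟩
  have preimage_iterate (n : ℕ) : T^[n] ⁻¹' s = s := by
    rw [Set.preimage_iterate_eq, Function.iterate_fixed hTs]
  have measure_eq_mul_self : μ.real s = μ.real s * μ.real s := by
    have correlation := hT.tendsto_measureReal_inter_preimage s s hs hs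
    simp only [preimage_iterate, Set.inter_self] at correlation
    exact tendsto_nhds_unique tendsto_const_nhds correlation
  have zero_or_one : μ.real s = 0 ∨ μ.real sᶜ = 0 := by
    rw [probReal_compl_eq_one_sub hs, ← mul_eq_zero]
    linarith
  rw [eventuallyConst_set']
  exact zero_or_one.imp (fun h ↦ ae_eq_empty.2 ((measureReal_eq_zero_iff).1 h))
    (fun h ↦ ae_eq_univ.2 ((measureReal_eq_zero_iff).1 h))

end StronglyMixing

end StronglyMixing

theorem ornstein_criterion_for_mixing_general {X : Type*} [MeasurableSpace X]
    (μ : Measure X) [IsProbabilityMeasure μ] (T : X → X) (hT : MeasurePreserving T μ μ) :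
    (∀ A B : Set X, MeasurableSet A → MeasurableSet B →
        Tendsto (fun n : ℕ ↦ μ.real (A ∩ T^[n] ⁻¹' B)) atTop (𝓝 (μ.real A * μ.real B))) ↔
      Ergodic (Prod.map T T) (μ.prod μ) ∧
        ∃ θ : ℝ, 0 < θ ∧ ∀ A B : Set X, MeasurableSet A → MeasurableSet B →
          limsup (fun n : ℕ ↦ μ.real (A ∩ T^[n] ⁻¹' B)) atTop ≤ θ * μ.real A * μ.real B := by
  constructor
  · intro h_mixing
    have hT_mixing : StronglyMixing T μ := ⟨hT, h_mixing⟩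
    refine ⟨(hT_mixing.prodMap hT_mixing).ergodic, 1, one_pos, fun A B hA hB ↦ ?_⟩
    rw [(h_mixing A B hA hB).limsup_eq, one_mul]
  · rintro ⟨h_ergodic, θ, -, hθ⟩
    exact (stronglyMixing_of_ergodic_prodMap_of_limsup_le hT h_ergodic
      hθ).tendsto_measureReal_inter_preimage

/-- Ornstein's criterion for mixing: `T` is strongly mixing if and only if `T` is weakly
mixing and there is `θ > 0` with `limsup_n μ(A ∩ T^{-n}B) ≤ θ μ(A) μ(B)` for all `A, B`. -/
theorem ornstein_criterion_for_mixing
    {X : Type*} [MeasurableSpace X]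
    (μ : Measure X) [IsProbabilityMeasure μ]
    (T : X ≃ᵐ X) (hT : MeasurePreserving T μ μ) :
    (∀ A B : Set X, MeasurableSet A → MeasurableSet B →
        Tendsto (fun n : ℕ => (μ (A ∩ T^[n] ⁻¹' B)).toReal) atTop
          (nhds ((μ A).toReal * (μ B).toReal)))
      ↔ (Ergodic (Prod.map T T) (μ.prod μ) ∧
          ∃ θ : ℝ, 0 < θ ∧
            ∀ A B : Set X, MeasurableSet A → MeasurableSet B →
              Filter.limsup (fun n : ℕ => (μ (A ∩ T^[n] ⁻¹' B)).toReal) atTop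
                ≤ θ * (μ A).toReal * (μ B).toReal) := by
  exact ornstein_criterion_for_mixing_general μ T hT
end

section
/- Let T and S be invertible measure-preserving transformations of standard Borel probability spaces (X, 𝒜, μ) and (Y, ℬ, ν). Suppose there exists a joining λ of T and S such that for every B ∈ ℬ there exists A ∈ 𝒜 with λ((X × B) Δ (A × Y)) = 0. Then S is a factor of T: there exists a measurable map π : X → Y such that π∗μ = ν, π ∘ T = S ∘ π μ-almost everywhere, and λ is the pushforward of μ under the map x ↦ (x, π(x)) (in particular λ is supported on the graph of π). -/
open MeasureTheory Set

/-!
The hypothesis on `λ` says that the second coordinate map `X × Y → Y` is measurable modulo `λ` with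
respect to the σ-algebra generated by the first coordinate. As `Y` embeds measurably in the Cantor
space, a function into `Y` is determined by countably many sets, so correcting each of them on a
null set yields a function `λ`-a.e. equal to the second coordinate and measurable in the first; by
Doob–Dynkin it is `π x` for some measurable `π`. Thus `λ` lives on the graph of `π`, and the
invariance of `λ` under `T × S` becomes the equivariance of `π`.
-/

section EventuallyMeasurable

open Filter

variable {Ω X Y : Type*} {m : MeasurableSpace Ω} {l : Filter Ω} [CountableInterFilter l]
  [MeasurableSpace X] [MeasurableSpace Y]

theorem exists_measurable_eventuallyEq_pi_bool {ι : Type*} [Countable ι] {g : Ω → ι → Bool}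
    (hg : EventuallyMeasurable m l g) : ∃ g' : Ω → ι → Bool, Measurable g' ∧ g =ᶠ[l] g' := by
  classical
  have hcoord (i : ι) : EventuallyMeasurableSet m l {ω | g ω i = true} :=
    hg (measurable_pi_apply i (measurableSet_singleton true))
  choose A hA hgA using hcoord
  refine ⟨fun ω i ↦ decide (ω ∈ A i), measurable_pi_lambda _ fun i ↦ measurable_to_bool ?_, ?_⟩
  · simpa [preimage] using hA i
  · have hmem : ∀ᶠ ω in l, ∀ i, g ω i = true ↔ ω ∈ A i :=
      eventually_countable_forall.mpr fun i ↦ (hgA i).mem_iff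
    filter_upwards [hmem] with ω hω
    ext i
    simp [← hω i]

theorem exists_measurable_eventuallyEq [StandardBorelSpace Y] {g : Ω → Y}
    (hg : EventuallyMeasurable m l g) : ∃ g' : Ω → Y, Measurable g' ∧ g =ᶠ[l] g' := by
  rcases isEmpty_or_nonempty Ω with _ | ⟨⟨ω₀⟩⟩
  · exact ⟨g, measurable_of_empty g, .rfl⟩
  have hcode : MeasurableEmbedding (MeasurableSpace.mapNatBool Y) :=
    (MeasurableSpace.measurable_mapNatBool Y).measurableEmbedding
      (MeasurableSpace.injective_mapNatBool Y)
  obtain ⟨decode, hdecode, hdecode_code⟩ :=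
    hcode.exists_measurable_extend measurable_id fun _ ↦ ⟨g ω₀⟩
  obtain ⟨c, hc, hgc⟩ :=
    exists_measurable_eventuallyEq_pi_bool (hcode.measurable.comp_eventuallyMeasurable hg)
  refine ⟨decode ∘ c, hdecode.comp hc, ?_⟩
  calc g = decode ∘ MeasurableSpace.mapNatBool Y ∘ g := by
        rw [← Function.comp_assoc, hdecode_code, Function.id_comp]
    _ =ᶠ[l] decode ∘ c := hgc.fun_comp decode

theorem exists_measurable_eventuallyEq_comp [StandardBorelSpace Y] [Nonempty Y]
    {f : Ω → X} {g : Ω → Y} (hg : EventuallyMeasurable (.comap f inferInstance) l g) :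
    ∃ π : X → Y, Measurable π ∧ g =ᶠ[l] π ∘ f := by
  obtain ⟨g', hg', hgg'⟩ := exists_measurable_eventuallyEq hg
  obtain ⟨π, hπ, rfl⟩ := hg'.exists_eq_measurable_comp
  exact ⟨π, hπ, hgg'⟩

end EventuallyMeasurable

section Joining

variable {X Y : Type*} [MeasurableSpace X] [MeasurableSpace Y] {lam : Measure (X × Y)}

theorem eventuallyMeasurable_snd_of_measure_symmDiff_eq_zero
    (hsub : ∀ B : Set Y, MeasurableSet B → ∃ A : Set X, MeasurableSet A ∧
      lam (symmDiff (univ ×ˢ B) (A ×ˢ univ)) = 0) :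
    EventuallyMeasurable (.comap Prod.fst inferInstance) (ae lam) (Prod.snd : X × Y → Y) := by
  intro B hB
  obtain ⟨A, hA, hAB⟩ := hsub B hB
  rw [univ_prod, prod_univ] at hAB
  exact ⟨Prod.fst ⁻¹' A, ⟨A, hA, rfl⟩, measure_symmDiff_eq_zero_iff.mp hAB⟩

theorem eq_map_fst_graph {π : X → Y} (hπ : Measurable π) (hgraph : Prod.snd =ᵐ[lam] π ∘ Prod.fst) :
    lam = lam.fst.map fun x ↦ (x, π x) := by
  calc lam = lam.map id := Measure.map_id.symm
    _ = lam.map ((fun x ↦ (x, π x)) ∘ Prod.fst) :=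
        Measure.map_congr (hgraph.mono fun _ h ↦ Prod.ext rfl h)
    _ = lam.fst.map fun x ↦ (x, π x) :=
        (Measure.map_map (measurable_id.prodMk hπ) measurable_fst).symm

theorem ae_fst_semiconj_of_snd_ae_eq {T : X → X} {S : Y → Y} {π : X → Y} (hπ : Measurable π)
    (hinv : Measure.QuasiMeasurePreserving (Prod.map T S) lam lam)
    (hgraph : Prod.snd =ᵐ[lam] π ∘ Prod.fst) : ∀ᵐ x ∂lam.fst, π (T x) = S (π x) := by
  have hlam : ∀ᵐ p ∂lam, π (T p.1) = S (π p.1) := by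
    filter_upwards [hgraph, hinv.ae hgraph] with p hp hTSp
    exact hTSp.symm.trans (congrArg S hp)
  rw [eq_map_fst_graph hπ hgraph] at hlam
  exact ae_of_ae_map (measurable_id.prodMk hπ).aemeasurable hlam

end Joining

theorem factor_of_joining_general
    {X Y : Type*} [MeasurableSpace X] [MeasurableSpace Y] [StandardBorelSpace Y] [Nonempty Y]
    {μ : Measure X} {ν : Measure Y} {T : X → X} {S : Y → Y} {lam : Measure (X × Y)}
    (h1 : lam.map Prod.fst = μ)
    (h2 : lam.map Prod.snd = ν)
    (hinv : Measure.QuasiMeasurePreserving (Prod.map T S) lam lam)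
    (hsub : ∀ B : Set Y, MeasurableSet B → ∃ A : Set X, MeasurableSet A ∧
      lam (symmDiff (univ ×ˢ B) (A ×ˢ univ)) = 0) :
    ∃ π : X → Y, Measurable π ∧ μ.map π = ν ∧
      (∀ᵐ x ∂μ, π (T x) = S (π x)) ∧
      lam = μ.map (fun x => (x, π x)) := by
  subst h1 h2
  obtain ⟨π, hπ, hgraph⟩ :=
    exists_measurable_eventuallyEq_comp (eventuallyMeasurable_snd_of_measure_symmDiff_eq_zero hsub)
  have hmap : (lam.map Prod.fst).map π = lam.map Prod.snd :=
    (Measure.map_map hπ measurable_fst).trans (Measure.map_congr hgraph.symm)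
  exact ⟨π, hπ, hmap, ae_fst_semiconj_of_snd_ae_eq hπ hinv hgraph, eq_map_fst_graph hπ hgraph⟩

/-- If there is a joining `λ` of `T` and `S` under which the σ-algebra of the second
coordinate is contained (mod `λ`) in that of the first, then `S` is a factor of `T`,
via a homomorphism `π` whose graph carries `λ`. -/
theorem factor_of_joining
    {X Y : Type*} [MeasurableSpace X] [StandardBorelSpace X]
    [MeasurableSpace Y] [StandardBorelSpace Y]
    (μ : Measure X) (ν : Measure Y) [IsProbabilityMeasure μ] [IsProbabilityMeasure ν]
    (T : X ≃ᵐ X) (S : Y ≃ᵐ Y)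
    (hT : MeasurePreserving T μ μ) (hS : MeasurePreserving S ν ν)
    (lam : Measure (X × Y))
    (h1 : lam.map Prod.fst = μ)
    (h2 : lam.map Prod.snd = ν)
    (hinv : MeasurePreserving (Prod.map T S) lam lam)
    (hsub : ∀ B : Set Y, MeasurableSet B → ∃ A : Set X, MeasurableSet A ∧
      lam (symmDiff (univ ×ˢ B) (A ×ˢ univ)) = 0) :
    ∃ π : X → Y, Measurable π ∧ μ.map π = ν ∧
      (∀ᵐ x ∂μ, π (T x) = S (π x)) ∧
      lam = μ.map (fun x => (x, π x)) := by
  have : Nonempty Y := nonempty_of_isProbabilityMeasure ν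
  exact factor_of_joining_general h1 h2 hinv.quasiMeasurePreserving hsub
end

section
/- Let T and S be invertible measure-preserving transformations of standard Borel probability spaces (X, 𝒜, μ) and (Y, ℬ, ν). Then T and S are isomorphic (there exist measurable sets X₀ ⊆ X and Y₀ ⊆ Y with μ(X₀) = ν(Y₀) = 1, invariant under T and S respectively, and a bimeasurable bijection φ : X₀ → Y₀ with φ∗μ = ν and φ ∘ T = S ∘ φ on X₀) if and only if there exists a joining λ of T and S such that both: for every B ∈ ℬ there exists A ∈ 𝒜 with λ((X × B) Δ (A × Y)) = 0, and for every A ∈ 𝒜 there exists B ∈ ℬ with λ((A × Y) Δ (X × B)) = 0. Moreover, in this case such a λ is supported on the graph of an isomorphism. -/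
open MeasureTheory Set

/-- `φ` realizes an isomorphism between the systems `(X, μ, T)` and `(Y, ν, S)`:
there are invariant full-measure sets `X₀, Y₀` on which `φ` is a bimeasurable
measure-preserving bijection intertwining `T` and `S`. -/
def IsIsomorphismVia {X Y : Type*} [MeasurableSpace X] [MeasurableSpace Y]
    (μ : Measure X) (ν : Measure Y) (T : X ≃ᵐ X) (S : Y ≃ᵐ Y) (φ : X → Y) : Prop :=
  ∃ (X₀ : Set X) (Y₀ : Set Y) (ψ : Y → X),
    MeasurableSet X₀ ∧ MeasurableSet Y₀ ∧ μ X₀ = 1 ∧ ν Y₀ = 1 ∧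
    T '' X₀ = X₀ ∧ S '' Y₀ = Y₀ ∧
    Measurable φ ∧ Measurable ψ ∧
    Set.MapsTo φ X₀ Y₀ ∧ Set.MapsTo ψ Y₀ X₀ ∧
    (∀ x ∈ X₀, ψ (φ x) = x) ∧ (∀ y ∈ Y₀, φ (ψ y) = y) ∧
    μ.map φ = ν ∧ (∀ x ∈ X₀, φ (T x) = S (φ x))

/-!
On the graph of an isomorphism the two coordinates determine each other, so the image of `μ` under
`x ↦ (x, φ x)` is a joining identifying the two σ-algebras. Conversely, if `lam` identifies them,
then the second coordinate is measurable modulo `lam` with respect to the first; as `Y` is a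
standard Borel space, countably many sets recover the point, and the second coordinate is almost
surely a measurable function `φ` of the first. Symmetrically the first is a function `ψ` of the
second. Hence `ψ ∘ φ = id` and `φ ∘ T = S ∘ φ` hold `μ`-almost everywhere, and discarding the
orbits that meet the exceptional null set turns `φ` into an isomorphism.
-/

open Filter

section EventuallyMeasurable

variable {X Y Z : Type*} [MeasurableSpace Y]

theorem eventuallyMeasurable_comap_iff [MeasurableSpace X] {l : Filter Z} [CountableInterFilter l]
    {p : Z → X} {q : Z → Y} :
    EventuallyMeasurable (MeasurableSpace.comap p inferInstance) l q ↔
      ∀ B, MeasurableSet B → ∃ A, MeasurableSet A ∧ q ⁻¹' B =ᶠ[l] p ⁻¹' A := by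
  refine forall₂_congr fun B _ => ⟨?_, ?_⟩
  · rintro ⟨_, ⟨A, hA, rfl⟩, hBA⟩
    exact ⟨A, hA, hBA⟩
  · rintro ⟨A, hA, hBA⟩
    exact ⟨p ⁻¹' A, ⟨A, hA, rfl⟩, hBA⟩

theorem exists_measurable_eventuallyEq_of_eventuallyMeasurable [StandardBorelSpace Y]
    [MeasurableSpace Z] {l : Filter Z} [CountableInterFilter l] {q : Z → Y}
    (hq : EventuallyMeasurable inferInstance l q) :
    ∃ g : Z → Y, Measurable g ∧ q =ᶠ[l] g := by
  classical
  rcases isEmpty_or_nonempty Z with _ | ⟨⟨z₀⟩⟩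
  · exact ⟨q, measurable_of_empty q, .rfl⟩
  let code : Y → ℕ → Bool := MeasurableSpace.mapNatBool Y
  have code_measurable : Measurable code := MeasurableSpace.measurable_mapNatBool Y
  have code_embedding : MeasurableEmbedding code :=
    code_measurable.measurableEmbedding (MeasurableSpace.injective_mapNatBool Y)
  obtain ⟨decode, decode_measurable, decode_code⟩ :=
    code_embedding.exists_measurable_extend measurable_id fun _ => ⟨q z₀⟩
  choose t ht hqt using fun n =>
    hq ((measurable_pi_apply n).comp code_measurable (MeasurableSet.singleton true))
  have approx_measurable : Measurable fun z n => decide (z ∈ t n) :=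
    measurable_pi_lambda _ fun n => measurable_to_bool (by simpa [preimage] using ht n)
  refine ⟨fun z => decode fun n => decide (z ∈ t n), decode_measurable.comp approx_measurable, ?_⟩
  filter_upwards [eventually_countable_forall.2 fun n => (hqt n).mem_iff] with z hz
  have code_eq : code (q z) = fun n => decide (z ∈ t n) :=
    funext fun n => by rw [Bool.eq_iff_iff, decide_eq_true_iff]; exact hz n
  rw [← code_eq]
  exact (congrFun decode_code (q z)).symm

theorem exists_measurable_eventuallyEq_comp_of_eventuallyMeasurable_comap [MeasurableSpace X]
    [StandardBorelSpace Y] [Nonempty Y] {l : Filter Z} [CountableInterFilter l]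
    {p : Z → X} {q : Z → Y}
    (hq : EventuallyMeasurable (MeasurableSpace.comap p inferInstance) l q) :
    ∃ φ : X → Y, Measurable φ ∧ q =ᶠ[l] φ ∘ p := by
  let _ : MeasurableSpace Z := MeasurableSpace.comap p inferInstance
  obtain ⟨g, hg, hqg⟩ := exists_measurable_eventuallyEq_of_eventuallyMeasurable hq
  obtain ⟨φ, hφ, rfl⟩ := hg.exists_eq_measurable_comp
  exact ⟨φ, hφ, hqg⟩

theorem eventuallyMeasurable_comap_of_eventuallyEq_comp [MeasurableSpace X] {l : Filter Z}
    [CountableInterFilter l] {p : Z → X} {q : Z → Y} {φ : X → Y} (hφ : Measurable φ)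
    (h : q =ᶠ[l] φ ∘ p) :
    EventuallyMeasurable (MeasurableSpace.comap p inferInstance) l q :=
  (hφ.comp (comap_measurable p)).eventuallyMeasurable_of_eventuallyEq h

end EventuallyMeasurable

section InvariantSet

variable {X : Type*} [MeasurableSpace X] {μ : Measure X} {e : Equiv.Perm X}

theorem quasiMeasurePreserving_zpow (he : Measure.QuasiMeasurePreserving e μ μ)
    (he_symm : Measure.QuasiMeasurePreserving e.symm μ μ) (n : ℤ) :
    Measure.QuasiMeasurePreserving (e ^ n : Equiv.Perm X) μ μ := by
  obtain ⟨k, rfl | rfl⟩ := n.eq_nat_or_neg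
  · rw [zpow_natCast, ← Equiv.Perm.iterate_eq_pow]
    exact he.iterate k
  · rw [zpow_neg, zpow_natCast, ← inv_pow, ← Equiv.Perm.iterate_eq_pow]
    exact he_symm.iterate k

theorem exists_measurableSet_image_eq_of_ae (he : Measure.QuasiMeasurePreserving e μ μ)
    (he_symm : Measure.QuasiMeasurePreserving e.symm μ μ) {P : X → Prop} (hP : ∀ᵐ x ∂μ, P x) :
    ∃ s, MeasurableSet s ∧ (∀ᵐ x ∂μ, x ∈ s) ∧ e '' s = s ∧ ∀ x ∈ s, P x := by
  obtain ⟨G, hG, hGm, hGP⟩ := hP.exists_measurable_mem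
  have hpow := quasiMeasurePreserving_zpow he he_symm
  refine ⟨⋂ n : ℤ, (e ^ n : Equiv.Perm X) ⁻¹' G, .iInter fun n => (hpow n).measurable hGm,
    ?_, ?_, fun x hx => hGP x (mem_iInter.1 hx 0)⟩
  · filter_upwards [ae_all_iff.2 fun n => (hpow n).ae hG] with x hx using mem_iInter.2 hx
  · rw [e.image_eq_preimage_symm, preimage_iInter,
      ← (Equiv.addRight (1 : ℤ)).surjective.iInter_comp]
    refine iInter_congr fun n => ?_
    rw [← preimage_comp, ← Equiv.Perm.coe_mul, ← Equiv.Perm.inv_def, Equiv.coe_addRight,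
      zpow_add_one, mul_inv_cancel_right]

end InvariantSet

section Isomorphism

variable {X Y : Type*} [MeasurableSpace X] [MeasurableSpace Y] {μ : Measure X} {ν : Measure Y}

theorem isIsomorphismVia_iff_ae [MeasurableEq X] [MeasurableEq Y] [IsProbabilityMeasure μ]
    {T : X ≃ᵐ X} {S : Y ≃ᵐ Y} (hT : MeasurePreserving T μ μ) {φ : X → Y} :
    IsIsomorphismVia μ ν T S φ ↔ MeasurePreserving φ μ ν ∧ φ ∘ T =ᵐ[μ] S ∘ φ ∧
      ∃ ψ : Y → X, Measurable ψ ∧ ψ ∘ φ =ᵐ[μ] id := by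
  constructor
  · rintro ⟨X₀, _, ψ, hX₀, -, hμX₀, -, -, -, hφ, hψ, -, -, hψφ, -, hmap, hcomm⟩
    have hae : ∀ᵐ x ∂μ, x ∈ X₀ := (mem_ae_iff_prob_eq_one hX₀).2 hμX₀
    exact ⟨⟨hφ, hmap⟩, hae.mono hcomm, ψ, hψ, hae.mono hψφ⟩
  · rintro ⟨hφ, hcomm, ψ, hψ, hψφ⟩
    obtain ⟨X₀, hX₀, hae, hTX₀, hP⟩ := exists_measurableSet_image_eq_of_ae (e := T.toEquiv)
      hT.quasiMeasurePreserving (hT.symm T).quasiMeasurePreserving (hψφ.and hcomm)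
    have hψφ₀ : LeftInvOn ψ φ X₀ := fun x hx => (hP x hx).1
    have hcomm₀ : ∀ x ∈ X₀, φ (T x) = S (φ x) := fun x hx => (hP x hx).2
    have image_eq : φ '' X₀ = ψ ⁻¹' X₀ ∩ {y | φ (ψ y) = y} := by
      ext y
      refine ⟨?_, fun ⟨hy, hφψ⟩ => ⟨ψ y, hy, hφψ⟩⟩
      rintro ⟨x, hx, rfl⟩
      simp [hψφ₀ hx, hx]
    have hY₀ : MeasurableSet (φ '' X₀) := image_eq ▸
      (hψ hX₀).inter (measurableSet_eq_fun (hφ.measurable.comp hψ) measurable_id)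
    have : IsProbabilityMeasure ν := hφ.map_eq ▸ Measure.isProbabilityMeasure_map hφ.aemeasurable
    have hνY₀ : ∀ᵐ y ∂ν, y ∈ φ '' X₀ := by
      rw [← hφ.map_eq]
      exact (mem_ae_map_iff hφ.aemeasurable hY₀).2 <| hae.mono fun x => mem_image_of_mem φ
    have hSY₀ : S '' (φ '' X₀) = φ '' X₀ := calc
      S '' (φ '' X₀) = φ '' (T '' X₀) := by
        simpa only [image_image] using image_congr fun x hx => (hcomm₀ x hx).symm
      _ = φ '' X₀ := congrArg (φ '' ·) hTX₀
    exact ⟨X₀, φ '' X₀, ψ, hX₀, hY₀, (mem_ae_iff_prob_eq_one hX₀).1 hae,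
      (mem_ae_iff_prob_eq_one hY₀).1 hνY₀, hTX₀, hSY₀, hφ.measurable, hψ, mapsTo_image φ X₀,
      fun y hy => (image_eq ▸ hy).1, hψφ₀, fun y hy => (image_eq ▸ hy).2, hφ.map_eq, hcomm₀⟩

end Isomorphism

section Joining

variable {X Y : Type*} [MeasurableSpace X] [MeasurableSpace Y] {μ : Measure X} {ν : Measure Y}

/-- A joining of `(X, μ, T)` and `(Y, ν, S)`: a measure on `X × Y` with marginals `μ` and `ν` that
is invariant under `T × S`. -/
structure IsJoining (μ : Measure X) (ν : Measure Y) (T : X → X) (S : Y → Y)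
    (lam : Measure (X × Y)) : Prop where
  map_fst : lam.map Prod.fst = μ
  map_snd : lam.map Prod.snd = ν
  measurePreserving_prodMap : MeasurePreserving (Prod.map T S) lam lam

theorem isJoining_map_graph {T : X → X} {S : Y → Y} (hT : MeasurePreserving T μ μ)
    (hS : Measurable S) {φ : X → Y} (hφ : MeasurePreserving φ μ ν) (hcomm : φ ∘ T =ᵐ[μ] S ∘ φ) :
    IsJoining μ ν T S (μ.map fun x => (x, φ x)) := by
  have hgraph : Measurable fun x => (x, φ x) := measurable_id.prodMk hφ.measurable
  have hprod : Measurable (Prod.map T S) := hT.measurable.prodMap hS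
  refine ⟨?_, ?_, hprod, ?_⟩
  · rw [Measure.map_map measurable_fst hgraph]
    exact Measure.map_id
  · rw [Measure.map_map measurable_snd hgraph]
    exact hφ.map_eq
  · calc (μ.map fun x => (x, φ x)).map (Prod.map T S)
      _ = μ.map fun x => (T x, S (φ x)) := Measure.map_map hprod hgraph
      _ = μ.map fun x => (T x, φ (T x)) :=
        Measure.map_congr (hcomm.mono fun x hx => Prod.ext rfl hx.symm)
      _ = (μ.map T).map fun x => (x, φ x) := (Measure.map_map hgraph hT.measurable).symm
      _ = μ.map fun x => (x, φ x) := by rw [hT.map_eq]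

namespace IsJoining

variable {T : X ≃ᵐ X} {S : Y ≃ᵐ Y} {lam : Measure (X × Y)}

theorem isIsomorphismVia [MeasurableEq X] [MeasurableEq Y] [IsProbabilityMeasure μ]
    (h : IsJoining μ ν T S lam) {φ : X → Y} {ψ : Y → X} (hφ : Measurable φ) (hψ : Measurable ψ)
    (hsnd : Prod.snd =ᵐ[lam] φ ∘ Prod.fst) (hfst : Prod.fst =ᵐ[lam] ψ ∘ Prod.snd) :
    IsIsomorphismVia μ ν T S φ := by
  have fst_preserving : MeasurePreserving Prod.fst lam μ := ⟨measurable_fst, h.map_fst⟩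
  have hT : MeasurePreserving T μ μ :=
    fst_preserving.of_semiconj h.measurePreserving_prodMap (fun _ => rfl) T.measurable
  refine (isIsomorphismVia_iff_ae hT).2 ⟨⟨hφ, ?_⟩, ?_, ψ, hψ, ?_⟩
  · rw [← h.map_fst, Measure.map_map hφ measurable_fst, ← h.map_snd]
    exact Measure.map_congr hsnd.symm
  · have hmeas := measurableSet_eq_fun (hφ.comp T.measurable) (S.measurable.comp hφ)
    rw [← h.map_fst]
    refine (ae_map_iff measurable_fst.aemeasurable hmeas).2 ?_
    filter_upwards [hsnd, h.measurePreserving_prodMap.quasiMeasurePreserving.ae hsnd] with z hz hTSz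
    exact hTSz.symm.trans (congrArg S hz)
  · rw [← h.map_fst]
    refine (ae_map_iff measurable_fst.aemeasurable
      (measurableSet_eq_fun (hψ.comp hφ) measurable_id)).2 ?_
    filter_upwards [hsnd, hfst] with z hz hz'
    exact (congrArg ψ hz).symm.trans hz'.symm

theorem exists_isIsomorphismVia [StandardBorelSpace X] [StandardBorelSpace Y]
    [IsProbabilityMeasure μ] (h : IsJoining μ ν T S lam)
    (hsnd : EventuallyMeasurable (MeasurableSpace.comap Prod.fst inferInstance) (ae lam) Prod.snd)
    (hfst : EventuallyMeasurable (MeasurableSpace.comap Prod.snd inferInstance) (ae lam) Prod.fst) :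
    ∃ φ : X → Y, IsIsomorphismVia μ ν T S φ ∧ lam {z | z.2 = φ z.1} = 1 := by
  have : IsProbabilityMeasure (lam.map Prod.fst) := h.map_fst ▸ inferInstance
  have : IsProbabilityMeasure lam := lam.isProbabilityMeasure_of_map Prod.fst
  obtain ⟨⟨x, y⟩⟩ := nonempty_of_isProbabilityMeasure lam
  have : Nonempty X := ⟨x⟩
  have : Nonempty Y := ⟨y⟩
  obtain ⟨φ, hφ, hsndφ⟩ := exists_measurable_eventuallyEq_comp_of_eventuallyMeasurable_comap hsnd
  obtain ⟨ψ, hψ, hfstψ⟩ := exists_measurable_eventuallyEq_comp_of_eventuallyMeasurable_comap hfst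
  refine ⟨φ, h.isIsomorphismVia hφ hψ hsndφ hfstψ, ?_⟩
  exact (measure_congr (eventuallyEq_univ.2 hsndφ)).trans measure_univ

end IsJoining

theorem IsIsomorphismVia.exists_isJoining [MeasurableEq X] [MeasurableEq Y]
    [IsProbabilityMeasure μ] {T : X ≃ᵐ X} {S : Y ≃ᵐ Y} (hT : MeasurePreserving T μ μ)
    {φ : X → Y} (h : IsIsomorphismVia μ ν T S φ) :
    ∃ lam, IsJoining μ ν T S lam ∧
      EventuallyMeasurable (MeasurableSpace.comap Prod.fst inferInstance) (ae lam) Prod.snd ∧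
      EventuallyMeasurable (MeasurableSpace.comap Prod.snd inferInstance) (ae lam) Prod.fst := by
  obtain ⟨hφ, hcomm, ψ, hψ, hψφ⟩ := (isIsomorphismVia_iff_ae hT).1 h
  have hgraph : Measurable fun x => (x, φ x) := measurable_id.prodMk hφ.measurable
  refine ⟨_, isJoining_map_graph hT S.measurable hφ hcomm,
    eventuallyMeasurable_comap_of_eventuallyEq_comp hφ.measurable ?_,
    eventuallyMeasurable_comap_of_eventuallyEq_comp hψ ?_⟩
  · exact (ae_map_iff hgraph.aemeasurable (measurableSet_eq_fun measurable_snd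
      (hφ.measurable.comp measurable_fst))).2 (.of_forall fun _ => rfl)
  · exact (ae_map_iff hgraph.aemeasurable (measurableSet_eq_fun measurable_fst
      (hψ.comp measurable_snd))).2 hψφ.symm

end Joining

/-- Two systems are isomorphic if and only if there is a joining identifying (mod 0) the
σ-algebras of the two coordinates; moreover such a joining is supported on the graph of
an isomorphism. -/
theorem isomorphic_iff_joining_identifying
    {X Y : Type*} [MeasurableSpace X] [StandardBorelSpace X]
    [MeasurableSpace Y] [StandardBorelSpace Y]
    (μ : Measure X) (ν : Measure Y) [IsProbabilityMeasure μ] [IsProbabilityMeasure ν]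
    (T : X ≃ᵐ X) (S : Y ≃ᵐ Y)
    (hT : MeasurePreserving T μ μ) (hS : MeasurePreserving S ν ν) :
    ((∃ φ : X → Y, IsIsomorphismVia μ ν T S φ) ↔
      (∃ lam : Measure (X × Y),
        lam.map Prod.fst = μ ∧ lam.map Prod.snd = ν ∧
        MeasurePreserving (Prod.map T S) lam lam ∧
        (∀ B : Set Y, MeasurableSet B → ∃ A : Set X, MeasurableSet A ∧
          lam (symmDiff (univ ×ˢ B) (A ×ˢ univ)) = 0) ∧
        (∀ A : Set X, MeasurableSet A → ∃ B : Set Y, MeasurableSet B ∧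
          lam (symmDiff (A ×ˢ univ) (univ ×ˢ B)) = 0)))
    ∧
    (∀ lam : Measure (X × Y),
      lam.map Prod.fst = μ → lam.map Prod.snd = ν →
      MeasurePreserving (Prod.map T S) lam lam →
      (∀ B : Set Y, MeasurableSet B → ∃ A : Set X, MeasurableSet A ∧
        lam (symmDiff (univ ×ˢ B) (A ×ˢ univ)) = 0) →
      (∀ A : Set X, MeasurableSet A → ∃ B : Set Y, MeasurableSet B ∧
        lam (symmDiff (A ×ˢ univ) (univ ×ˢ B)) = 0) →
      ∃ φ : X → Y, IsIsomorphismVia μ ν T S φ ∧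
        lam {p : X × Y | p.2 = φ p.1} = 1) := by
  simp only [univ_prod, prod_univ, measure_symmDiff_eq_zero_iff, ← eventuallyMeasurable_comap_iff]
  refine ⟨⟨?_, ?_⟩, ?_⟩
  · rintro ⟨φ, hφ⟩
    obtain ⟨lam, hlam, hsnd, hfst⟩ := hφ.exists_isJoining hT
    exact ⟨lam, hlam.map_fst, hlam.map_snd, hlam.measurePreserving_prodMap, hsnd, hfst⟩
  · rintro ⟨lam, hμ, hν, hTS, hsnd, hfst⟩
    obtain ⟨φ, hφ, -⟩ := IsJoining.exists_isIsomorphismVia ⟨hμ, hν, hTS⟩ hsnd hfst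
    exact ⟨φ, hφ⟩
  · intro lam hμ hν hTS hsnd hfst
    exact IsJoining.exists_isIsomorphismVia ⟨hμ, hν, hTS⟩ hsnd hfst
end

section
/- Halmos–von Neumann theorem (joining proof): Let T and S be invertible measure-preserving transformations of standard Borel probability spaces (X, 𝒜, μ) and (Y, ℬ, ν). Suppose T is ergodic and has discrete spectrum, and suppose S is spectrally isomorphic to T, i.e., there exists a unitary operator U : L²(ν) → L²(μ) such that U(g ∘ S) = (U g) ∘ T for all g ∈ L²(ν). Then T and S are isomorphic: there exist measurable sets X₀ ⊆ X, Y₀ ⊆ Y of full measure, invariant under T and S respectively, and a bimeasurable measure-preserving bijection φ : X₀ → Y₀ with φ ∘ T = S ∘ φ. -/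
open MeasureTheory Set

/-!
Let `Λ` be the countable group of eigenvalues of `T`. By ergodicity the eigenfunctions have constant
modulus and are unique up to a scalar, so normalizing them at a generic point makes them
multiplicative in the eigenvalue: `x ↦ (F x l)_l` takes values in the characters of `Λ` and carries
`T` to the rotation `z l ↦ l * z l`. Fourier coefficients show that there is only one probability
measure on the characters invariant under this rotation, and discrete spectrum makes `F` injective
off a null set. Hence the isomorphism class of `T` depends only on `Λ`, which is a spectral
invariant.
-/

lemma image_eq_self_iff_forall_mem_iff {α : Type*} {e : α ≃ α} {s : Set α} :
    e '' s = s ↔ ∀ x, e x ∈ s ↔ x ∈ s := by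
  refine ⟨fun h x => ?_, fun h => ?_⟩
  · nth_rw 1 [← h]
    exact e.injective.mem_set_image
  · ext x
    rw [e.image_eq_preimage_symm, mem_preimage, ← h, e.apply_symm_apply]

lemma image_inter_preimage_eq_self {α β : Type*} {e : α ≃ α} {e' : β ≃ β} {f : α → β}
    {s : Set α} {t : Set β} (hs : e '' s = s) (ht : e' '' t = t)
    (hf : ∀ x ∈ s, f (e x) = e' (f x)) : e '' (s ∩ f ⁻¹' t) = s ∩ f ⁻¹' t := by
  rw [image_eq_self_iff_forall_mem_iff] at hs ht ⊢
  intro x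
  simp only [mem_inter_iff, mem_preimage, hs]
  exact and_congr_right fun hx => by rw [hf x hx, ht]

lemma comm_of_comm_of_invOn {α β : Type*} {e : α ≃ α} {e' : β → β} {f : α → β} {g : β → α}
    {s : Set α} {t : Set β} (hs : e '' s = s) (hg : MapsTo g t s) (hgf : InvOn g f s t)
    (hf : ∀ x ∈ s, f (e x) = e' (f x)) : ∀ y ∈ t, g (e' y) = e (g y) := by
  intro y hy
  have hegy : e (g y) ∈ s := (image_eq_self_iff_forall_mem_iff.1 hs _).2 (hg hy)
  rw [← hgf.1 hegy, hf _ (hg hy), hgf.2 hy]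

lemma measurePreserving_map_of_ae_comm {X Z : Type*} [MeasurableSpace X] [MeasurableSpace Z]
    {μ : Measure X} {T : X → X} {F : X → Z} {R : Z → Z} (hT : MeasurePreserving T μ μ)
    (hF : Measurable F) (hR : Measurable R) (hFT : F ∘ T =ᵐ[μ] R ∘ F) :
    MeasurePreserving R (μ.map F) (μ.map F) := by
  refine ⟨hR, ?_⟩
  rw [Measure.map_map hR hF, ← Measure.map_congr hFT, ← Measure.map_map hF hT.measurable, hT.map_eq]

section InvariantSets

variable {X : Type*} [MeasurableSpace X] {μ : Measure X} {T : X ≃ᵐ X}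

lemma measurePreserving_zpow_toEquiv (hT : MeasurePreserving T μ μ) (n : ℤ) :
    MeasurePreserving (T.toEquiv ^ n : Equiv.Perm X) μ μ := by
  induction n with
  | zero => exact MeasurePreserving.id μ
  | succ n ih =>
    rw [zpow_add_one, Equiv.Perm.coe_mul]
    exact ih.comp hT
  | pred n ih =>
    rw [zpow_sub_one, Equiv.Perm.coe_mul]
    exact ih.comp (hT.symm T)

lemma exists_invariant_measurableSet_of_ae (hT : MeasurePreserving T μ μ) {p : X → Prop}
    (hp : ∀ᵐ x ∂μ, p x) :
    ∃ A, MeasurableSet A ∧ A ∈ ae μ ∧ T '' A = A ∧ ∀ x ∈ A, p x := by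
  obtain ⟨B, hB_ae, hB, hBp⟩ := hp.exists_measurable_mem
  refine ⟨⋂ n : ℤ, (T.toEquiv ^ n : Equiv.Perm X) ⁻¹' B, ?_, ?_, ?_, ?_⟩
  · exact .iInter fun n => (measurePreserving_zpow_toEquiv hT n).measurable hB
  · exact countable_iInter_mem.2 fun n =>
      (measurePreserving_zpow_toEquiv hT n).quasiMeasurePreserving.ae hB_ae
  · refine image_eq_self_iff_forall_mem_iff (e := T.toEquiv).2 fun x => ?_
    simp only [mem_iInter, mem_preimage, ← Equiv.Perm.mul_apply, ← zpow_add_one]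
    exact (Equiv.addRight (1 : ℤ)).forall_congr fun n => by rfl
  · exact fun x hx => hBp x (mem_iInter.1 hx 0)

end InvariantSets

section Isomorphism

variable {X Y Z : Type*} [MeasurableSpace X] [MeasurableSpace Y] [MeasurableSpace Z]
  {μ : Measure X} {ν : Measure Y} {ρ : Measure Z} {T : X ≃ᵐ X} {S : Y ≃ᵐ Y} {R : Z ≃ᵐ Z}

lemma map_eq_of_map_eq_of_leftInvOn [IsProbabilityMeasure μ] {φ : X → Y} {ψ : Y → X} {A : Set X}
    (hφ : Measurable φ) (hψ : Measurable ψ) (hφν : μ.map φ = ν) (hA : MeasurableSet A)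
    (hμA : μ A = 1) (hψφ : LeftInvOn ψ φ A) : ν.map ψ = μ := by
  have hψφ_ae : ψ ∘ φ =ᵐ[μ] id :=
    Filter.mem_of_superset ((mem_ae_iff_prob_eq_one hA).2 hμA) hψφ
  rw [← hφν, Measure.map_map hψ hφ, Measure.map_congr hψφ_ae, Measure.map_id]

lemma measure_inter_preimage_eq_one [IsProbabilityMeasure μ] {φ : X → Y} {A : Set X} {B : Set Y}
    (hφ : Measurable φ) (hφν : μ.map φ = ν) (hA : MeasurableSet A) (hμA : μ A = 1)
    (hB : MeasurableSet B) (hνB : ν B = 1) : μ (A ∩ φ ⁻¹' B) = 1 := by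
  rw [← hφν, Measure.map_apply hφ hB, ← mem_ae_iff_prob_eq_one (hφ hB)] at hνB
  rw [← mem_ae_iff_prob_eq_one hA] at hμA
  exact (mem_ae_iff_prob_eq_one (hA.inter (hφ hB))).1 (Filter.inter_mem hμA hνB)

theorem IsIsomorphismVia.symm [IsProbabilityMeasure μ] {φ : X → Y}
    (h : IsIsomorphismVia μ ν T S φ) : ∃ ψ, IsIsomorphismVia ν μ S T ψ := by
  obtain ⟨X₀, Y₀, ψ, hX₀, hY₀, hμX₀, hνY₀, hTX₀, hSY₀, hφ, hψ, hφm, hψm, hψφ, hφψ, hφν, hφT⟩ := h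
  exact ⟨ψ, Y₀, X₀, φ, hY₀, hX₀, hνY₀, hμX₀, hSY₀, hTX₀, hψ, hφ, hψm, hφm, hφψ, hψφ,
    map_eq_of_map_eq_of_leftInvOn hφ hψ hφν hX₀ hμX₀ hψφ,
    comm_of_comm_of_invOn (e := T.toEquiv) hTX₀ hψm ⟨hψφ, hφψ⟩ hφT⟩

theorem IsIsomorphismVia.trans [IsProbabilityMeasure μ] {φ : X → Y} {χ : Y → Z}
    (h : IsIsomorphismVia μ ν T S φ) (h' : IsIsomorphismVia ν ρ S R χ) :
    IsIsomorphismVia μ ρ T R (χ ∘ φ) := by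
  obtain ⟨X₀, Y₀, ψ, hX₀, hY₀, hμX₀, hνY₀, hTX₀, hSY₀, hφ, hψ, hφm, hψm, hψφ, hφψ, hφν, hφT⟩ := h
  obtain ⟨Y₁, Z₁, ω, hY₁, hZ₁, hνY₁, hρZ₁, hSY₁, hRZ₁, hχ, hω, hχm, hωm, hωχ, hχω, hχρ, hχS⟩ := h'
  have : IsProbabilityMeasure ν := hφν ▸ Measure.isProbabilityMeasure_map hφ.aemeasurable
  have : IsProbabilityMeasure ρ := hχρ ▸ Measure.isProbabilityMeasure_map hχ.aemeasurable
  have hων : ρ.map ω = ν := map_eq_of_map_eq_of_leftInvOn hχ hω hχρ hY₁ hνY₁ hωχ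
  have hωR : ∀ z ∈ Z₁, ω (R z) = S (ω z) :=
    comm_of_comm_of_invOn (e := S.toEquiv) hSY₁ hωm ⟨hωχ, hχω⟩ hχS
  refine ⟨X₀ ∩ φ ⁻¹' Y₁, Z₁ ∩ ω ⁻¹' Y₀, ψ ∘ ω, hX₀.inter (hφ hY₁), hZ₁.inter (hω hY₀),
    measure_inter_preimage_eq_one hφ hφν hX₀ hμX₀ hY₁ hνY₁,
    measure_inter_preimage_eq_one hω hων hZ₁ hρZ₁ hY₀ hνY₀,
    image_inter_preimage_eq_self (e := T.toEquiv) (e' := S.toEquiv) hTX₀ hSY₁ hφT,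
    image_inter_preimage_eq_self (e := R.toEquiv) (e' := S.toEquiv) hRZ₁ hSY₀ hωR,
    hχ.comp hφ, hψ.comp hω, ?_, ?_, ?_, ?_, ?_, ?_⟩
  · rintro x ⟨hx₀, hx₁⟩
    exact ⟨hχm hx₁, by simpa [hωχ _ hx₁] using hφm hx₀⟩
  · rintro z ⟨hz₁, hz₀⟩
    exact ⟨hψm hz₀, by simpa [hφψ _ hz₀] using hωm hz₁⟩
  · rintro x ⟨hx₀, hx₁⟩
    simp [hωχ _ hx₁, hψφ x hx₀]
  · rintro z ⟨hz₁, hz₀⟩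
    simp [hφψ _ hz₀, hχω z hz₁]
  · rw [← Measure.map_map hχ hφ, hφν, hχρ]
  · rintro x ⟨hx₀, hx₁⟩
    rw [Function.comp_apply, hφT x hx₀, hχS _ hx₁, Function.comp_apply]

theorem isIsomorphismVia_map_of_injOn [StandardBorelSpace X] [MeasurableSpace.CountablySeparated Z]
    [IsProbabilityMeasure μ] {F : X → Z} (hT : MeasurePreserving T μ μ) (hF : Measurable F)
    (hFT : ∀ᵐ x ∂μ, F (T x) = R (F x)) {B : Set X} (hB : B ∈ ae μ) (hFB : InjOn F B) :
    IsIsomorphismVia μ (μ.map F) T R F := by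
  obtain ⟨A, hA, hμA, hTA, hA_sub⟩ := exists_invariant_measurableSet_of_ae hT (hFT.and hB)
  have hFA : InjOn F A := hFB.mono fun x hx => (hA_sub x hx).2
  have hFTA : ∀ x ∈ A, F (T x) = R (F x) := fun x hx => (hA_sub x hx).1
  have := hA.standardBorel
  have hemb : MeasurableEmbedding (A.domRestrict F) :=
    (hF.comp measurable_subtype_coe).measurableEmbedding hFA.injective
  have hFA_meas : MeasurableSet (F '' A) := range_domRestrict F A ▸ hemb.measurableSet_range
  obtain ⟨G, hG, hGF⟩ := hemb.exists_measurable_extend measurable_subtype_coe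
    fun _ => μ.nonempty_of_neZero
  have hGFA : LeftInvOn G F A := fun x hx => congrFun hGF ⟨x, hx⟩
  have hRFA : R '' (F '' A) = F '' A := by
    nth_rw 2 [← hTA]
    simp only [image_image]
    exact image_congr fun x hx => (hFTA x hx).symm
  have hμFA : μ.map F (F '' A) = 1 := by
    rw [Measure.map_apply hF hFA_meas, ← mem_ae_iff_prob_eq_one (hF hFA_meas)]
    exact Filter.mem_of_superset hμA (subset_preimage_image F A)
  exact ⟨A, F '' A, G, hA, hFA_meas, (mem_ae_iff_prob_eq_one hA).1 hμA, hμFA, hTA, hRFA, hF, hG,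
    mapsTo_image F A, hGFA.mapsTo (surjOn_image F A), hGFA, hGFA.rightInvOn_image, rfl, hFTA⟩

end Isomorphism

section DualRotation

noncomputable instance instMeasurableSpaceCircle : MeasurableSpace Circle := borel Circle

instance : BorelSpace Circle := ⟨rfl⟩

variable {Λ : Type*}

/-- The evaluation `z ↦ z l` as a bounded continuous function on `Λ → Circle`. -/
noncomputable def evalBCF (l : Λ) : BoundedContinuousFunction (Λ → Circle) ℂ :=
  .mkOfCompact ⟨fun z => (z l : ℂ), by fun_prop⟩

lemma evalBCF_apply (l : Λ) (z : Λ → Circle) : evalBCF l z = z l := rfl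

lemma separatesPoints_adjoin_evalBCF :
    ((StarAlgebra.adjoin ℂ (range (evalBCF (Λ := Λ)))).map
      (BoundedContinuousFunction.toContinuousMapStarₐ ℂ)).SeparatesPoints := by
  intro z w hzw
  obtain ⟨l, hl⟩ := Function.ne_iff.1 hzw
  exact ⟨fun z => z l, ⟨_, ⟨evalBCF l, StarAlgebra.subset_adjoin ℂ _ (mem_range_self l), rfl⟩, rfl⟩,
    Circle.coe_injective.ne hl⟩

/-- The unitary characters of `Λ`, a closed subset of `Λ → Circle`: the Pontryagin dual of the
discrete group `Λ`, with the topology of pointwise convergence. -/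
def characters (Λ : Type*) [Group Λ] : Set (Λ → Circle) :=
  range ((↑) : (Λ →* Circle) → Λ → Circle)

variable [Group Λ]

lemma isClosed_characters : IsClosed (characters Λ) :=
  MonoidHom.isClosed_range_coe Λ Circle

lemma exists_eqOn_evalBCF_of_mem_closure {p : BoundedContinuousFunction (Λ → Circle) ℂ}
    (hp : p ∈ Submonoid.closure (range (evalBCF (Λ := Λ)) ∪ star (range evalBCF))) :
    ∃ l, EqOn p (evalBCF l) (characters Λ) := by
  induction hp using Submonoid.closure_induction with
  | mem p hp =>
    obtain ⟨l, rfl⟩ | ⟨l, hl⟩ := hp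
    · exact ⟨l, eqOn_refl _ _⟩
    · refine ⟨l⁻¹, ?_⟩
      rintro _ ⟨χ, rfl⟩
      rw [← star_star p, ← hl, BoundedContinuousFunction.star_apply, evalBCF_apply, evalBCF_apply,
        map_inv, Circle.coe_inv_eq_conj, starRingEnd_apply]
  | one =>
    refine ⟨1, ?_⟩
    rintro _ ⟨χ, rfl⟩
    simp [evalBCF_apply]
  | mul p q _ _ ihp ihq =>
    obtain ⟨l, hl⟩ := ihp
    obtain ⟨m, hm⟩ := ihq
    refine ⟨l * m, ?_⟩
    rintro z ⟨χ, rfl⟩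
    simp [hl ⟨χ, rfl⟩, hm ⟨χ, rfl⟩, evalBCF_apply]

variable {P Q : Measure (Λ → Circle)}

theorem ext_of_integral_eval_eq [Countable Λ] [IsFiniteMeasure P] [IsFiniteMeasure Q]
    (hP : characters Λ ∈ ae P) (hQ : characters Λ ∈ ae Q)
    (h : ∀ l, ∫ z, (z l : ℂ) ∂P = ∫ z, (z l : ℂ) ∂Q) : P = Q := by
  have : PolishSpace Circle := inferInstance
  refine ext_of_forall_mem_subalgebra_integral_eq_of_polish (𝕜 := ℂ)
    separatesPoints_adjoin_evalBCF fun p hp => ?_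
  have hp_span : p ∈ Submodule.span ℂ
      (Submonoid.closure (range (evalBCF (Λ := Λ)) ∪ star (range evalBCF)) :
        Set (BoundedContinuousFunction (Λ → Circle) ℂ)) := by
    rw [← Algebra.adjoin_eq_span]
    exact hp
  clear hp
  induction hp_span using Submodule.span_induction with
  | mem p hp =>
    obtain ⟨l, hl⟩ := exists_eqOn_evalBCF_of_mem_closure hp
    rw [integral_congr_ae (Filter.mem_of_superset hP hl),
      integral_congr_ae (Filter.mem_of_superset hQ hl)]
    exact h l
  | zero => simp
  | add p q _ _ ihp ihq =>
    simp only [BoundedContinuousFunction.coe_add, Pi.add_apply]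
    rw [integral_add (p.integrable P) (q.integrable P),
      integral_add (p.integrable Q) (q.integrable Q), ihp, ihq]
  | smul a p _ ih =>
    simp only [BoundedContinuousFunction.coe_smul, integral_smul, ih]

/-- `P` is a probability measure on the characters of `Λ` that is invariant under multiplication
by the character `χ`. -/
structure IsDualRotationMeasure (χ : Λ →* Circle) (P : Measure (Λ → Circle)) : Prop where
  isProbabilityMeasure : IsProbabilityMeasure P
  measurePreserving : MeasurePreserving (⇑χ * ·) P P
  characters_mem_ae : characters Λ ∈ ae P

variable {χ : Λ →* Circle}

lemma integral_eval_eq_zero (hP : MeasurePreserving (⇑χ * ·) P P) {l : Λ} (hl : χ l ≠ 1) :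
    ∫ z, (z l : ℂ) ∂P = 0 := by
  have h_rot : ∫ z, (z l : ℂ) ∂P = χ l * ∫ z, (z l : ℂ) ∂P :=
    calc ∫ z, (z l : ℂ) ∂P = ∫ z, ((⇑χ * z) l : ℂ) ∂P := by
          conv_lhs => rw [← hP.map_eq]
          exact integral_map hP.aemeasurable
            (Measurable.aestronglyMeasurable (by fun_prop))
      _ = χ l * ∫ z, (z l : ℂ) ∂P := by
          simp only [Pi.mul_apply, Circle.coe_mul, integral_const_mul]
  by_contra h0
  exact hl (Circle.coe_eq_one.1 (mul_right_cancel₀ h0 (by rw [← h_rot, one_mul])))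

lemma integral_eval_one_eq_one [IsProbabilityMeasure P] (hP : characters Λ ∈ ae P) :
    ∫ z, (z 1 : ℂ) ∂P = 1 := by
  have h_one : ∀ᵐ z ∂P, (z 1 : ℂ) = 1 := by
    filter_upwards [hP]
    rintro _ ⟨ψ, rfl⟩
    rw [map_one, Circle.coe_one]
  simp [integral_congr_ae h_one]

theorem IsDualRotationMeasure.unique [Countable Λ] (hχ : Function.Injective χ)
    (hP : IsDualRotationMeasure χ P) (hQ : IsDualRotationMeasure χ Q) : P = Q := by
  have := hP.isProbabilityMeasure
  have := hQ.isProbabilityMeasure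
  refine ext_of_integral_eval_eq hP.characters_mem_ae hQ.characters_mem_ae fun l => ?_
  obtain rfl | hl := eq_or_ne l 1
  · rw [integral_eval_one_eq_one hP.characters_mem_ae,
      integral_eval_one_eq_one hQ.characters_mem_ae]
  · have hχl : χ l ≠ 1 := (map_ne_one_iff χ hχ).2 hl
    rw [integral_eval_eq_zero hP.measurePreserving hχl,
      integral_eval_eq_zero hQ.measurePreserving hχl]

end DualRotation

section SpectrumOfIsometries

open Module.End

variable {𝕜 E F : Type*} [RCLike 𝕜] [NormedAddCommGroup E] [NormedAddCommGroup F]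

lemma hasEigenvalue_of_semiconj {R M N : Type*} [CommRing R] [AddCommGroup M] [Module R M]
    [AddCommGroup N] [Module R N] {A : Module.End R M} {B : Module.End R N} {V : M →ₗ[R] N}
    (hV : Function.Injective V) (hVAB : Function.Semiconj V A B) {c : R} (hc : HasEigenvalue A c) :
    HasEigenvalue B c := by
  obtain ⟨v, hv⟩ := hc.exists_hasEigenvector
  refine hasEigenvalue_of_hasEigenvector (x := V v) (hasEigenvector_iff.2 ⟨?_, ?_⟩)
  · rw [mem_eigenspace_iff, ← hVAB, hv.apply_eq_smul, map_smul]
  · exact (map_ne_zero_iff V hV).2 hv.2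

lemma rank_eigenspace_le_one_of_semiconj {K V W : Type*} [Field K] [AddCommGroup V] [Module K V]
    [AddCommGroup W] [Module K W] {A : Module.End K V} {B : Module.End K W} {U : V →ₗ[K] W}
    (hU : Function.Injective U) (hUAB : Function.Semiconj U A B) {c : K}
    (hc : Module.rank K (eigenspace B c) ≤ 1) : Module.rank K (eigenspace A c) ≤ 1 := by
  have hU_maps : ∀ v ∈ eigenspace A c, U v ∈ eigenspace B c := fun v hv => by
    rw [mem_eigenspace_iff, ← hUAB, mem_eigenspace_iff.1 hv, map_smul]
  have h_inj : Function.Injective (U.restrict hU_maps) := fun v w h =>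
    Subtype.ext (hU (congrArg Subtype.val h))
  rw [← Cardinal.lift_le_one_iff] at hc ⊢
  exact (LinearMap.lift_rank_le_of_injective _ h_inj).trans hc

lemma topologicalClosure_span_eigenvectors_eq_top_of_semiconj [NormedSpace 𝕜 E] [NormedSpace 𝕜 F]
    {A : E → E} {B : F → F} {V : E →L[𝕜] F} (hV : DenseRange V) (hVAB : Function.Semiconj V A B)
    (hA : (Submodule.span 𝕜 {v | ∃ c : 𝕜, A v = c • v}).topologicalClosure = ⊤) :
    (Submodule.span 𝕜 {w | ∃ c : 𝕜, B w = c • w}).topologicalClosure = ⊤ := by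
  rw [eq_top_iff, ← hV.topologicalClosure_map_submodule hA]
  refine Submodule.topologicalClosure_mono ((Submodule.map_span_le _ _ _).2 ?_)
  rintro v ⟨c, hc⟩
  refine Submodule.subset_span ⟨c, ?_⟩
  change B (V v) = c • V v
  rw [← hVAB, hc, map_smul]

lemma norm_eq_one_of_hasEigenvalue [NormedSpace 𝕜 E] {A : E →ₗᵢ[𝕜] E} {c : 𝕜}
    (hc : HasEigenvalue A.toLinearMap c) : ‖c‖ = 1 := by
  obtain ⟨v, hv⟩ := hc.exists_hasEigenvector
  refine mul_right_cancel₀ (norm_ne_zero_iff.2 hv.2) ?_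
  rw [← norm_smul, ← hv.apply_eq_smul, LinearIsometry.coe_toLinearMap, A.norm_map, one_mul]

variable [InnerProductSpace 𝕜 E]

lemma inner_eq_zero_of_hasEigenvector {A : E →ₗᵢ[𝕜] E} {c d : 𝕜} {v w : E} (hcd : c ≠ d)
    (hv : HasEigenvector A.toLinearMap c v) (hw : HasEigenvector A.toLinearMap d w) :
    inner 𝕜 v w = 0 := by
  have hc : c * starRingEnd 𝕜 c = 1 := by
    rw [RCLike.mul_conj, norm_eq_one_of_hasEigenvalue (hasEigenvalue_of_hasEigenvector hv)]
    simp
  have h_inner : starRingEnd 𝕜 c * d * inner 𝕜 v w = inner 𝕜 v w :=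
    calc starRingEnd 𝕜 c * d * inner 𝕜 v w = inner 𝕜 (c • v) (d • w) := by
          rw [inner_smul_left, inner_smul_right, mul_assoc]
      _ = inner 𝕜 (A v) (A w) := by
          rw [← hv.apply_eq_smul, ← hw.apply_eq_smul, LinearIsometry.coe_toLinearMap]
      _ = inner 𝕜 v w := A.inner_map_map v w
  have h_sub : (d - c) * inner 𝕜 v w = 0 := by
    linear_combination c * h_inner - d * inner 𝕜 v w * hc
  exact (mul_eq_zero.1 h_sub).resolve_left (sub_ne_zero.2 hcd.symm)

lemma countable_of_orthonormal [TopologicalSpace.SeparableSpace E] {ι : Type*} {v : ι → E}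
    (hv : Orthonormal 𝕜 v) : Countable ι := by
  refine Pairwise.countable_of_isOpen_disjoint (s := fun i => Metric.ball (v i) (1 / 2))
    (fun i j hij => Metric.ball_disjoint_ball ?_) (fun _ => Metric.isOpen_ball)
    fun _ => Metric.nonempty_ball.2 one_half_pos
  have h_norm : ‖v i - v j‖ ^ 2 = 2 := by
    rw [norm_sub_sq (𝕜 := 𝕜), hv.inner_eq_zero hij, hv.norm_eq_one, hv.norm_eq_one]
    norm_num
  rw [dist_eq_norm]
  nlinarith [norm_nonneg (v i - v j)]

theorem countable_setOf_hasEigenvalue [TopologicalSpace.SeparableSpace E] (A : E →ₗᵢ[𝕜] E) :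
    {c | HasEigenvalue A.toLinearMap c}.Countable := by
  choose v hv using fun c : {c | HasEigenvalue A.toLinearMap c} => c.2.exists_hasEigenvector
  refine countable_of_orthonormal (𝕜 := 𝕜) (v := fun c => (‖v c‖⁻¹ : 𝕜) • v c) ⟨fun c => ?_, ?_⟩
  · exact norm_smul_inv_norm (hv c).2
  · intro c d hcd
    rw [inner_smul_left, inner_smul_right,
      inner_eq_zero_of_hasEigenvector (Subtype.coe_ne_coe.2 hcd) (hv c) (hv d), mul_zero, mul_zero]

end SpectrumOfIsometries

section Koopman

open Module.End

variable {X : Type*} [MeasurableSpace X] {μ : Measure X} {T : X → X}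

/-- The Koopman operator `f ↦ f ∘ T` of a measure-preserving map, as an isometry of `L²(μ)`. -/
noncomputable abbrev koopman (hT : MeasurePreserving T μ μ) : Lp ℂ 2 μ →ₗᵢ[ℂ] Lp ℂ 2 μ :=
  Lp.compMeasurePreservingₗᵢ ℂ T hT

lemma coeFn_koopman (hT : MeasurePreserving T μ μ) (f : Lp ℂ 2 μ) : koopman hT f =ᵐ[μ] f ∘ T :=
  Lp.coeFn_compMeasurePreserving f hT

lemma koopman_indicatorConstLp [IsFiniteMeasure μ] (hT : MeasurePreserving T μ μ) {A : Set X}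
    (hA : MeasurableSet A) (hTA : T ⁻¹' A = A) (c : ℂ) :
    koopman hT (indicatorConstLp 2 hA (measure_ne_top μ A) c) =
      indicatorConstLp 2 hA (measure_ne_top μ A) c :=
  (Lp.indicatorConstLp_compMeasurePreserving hA (measure_ne_top μ A) c hT).trans <| by
    simp only [hTA]

theorem ergodic_iff_rank_eigenspace_koopman_one_le_one [IsFiniteMeasure μ]
    (hT : MeasurePreserving T μ μ) :
    Ergodic T μ ↔ Module.rank ℂ (eigenspace (koopman hT).toLinearMap 1) ≤ 1 := by
  rw [rank_submodule_le_one_iff']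
  constructor
  · refine fun hTe => ⟨Lp.const 2 μ 1, fun f hf => ?_⟩
    rw [mem_eigenspace_iff, one_smul] at hf
    obtain ⟨c, hc⟩ := hTe.eq_const_of_compMeasurePreserving_eq (congrArg Subtype.val hf)
    refine Submodule.mem_span_singleton.2 ⟨c, ?_⟩
    rw [← Lp.constₗ_apply 2 μ ℂ, ← map_smul, smul_eq_mul, mul_one]
    exact Subtype.ext hc.symm
  · rintro ⟨f, hf⟩
    refine ⟨hT, ⟨fun A hA hTA => Filter.eventuallyConst_set.2 ?_⟩⟩
    have h_indicator : ∀ B : Set X, MeasurableSet B → T ⁻¹' B = B →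
        ∃ k : ℂ, ∀ᵐ x ∂μ, k * f x = B.indicator 1 x := fun B hB hTB => by
      obtain ⟨k, hk⟩ := Submodule.mem_span_singleton.1 (hf (mem_eigenspace_iff.2
        ((koopman_indicatorConstLp hT hB hTB 1).trans (one_smul ℂ _).symm)))
      refine ⟨k, (Lp.coeFn_smul k f).symm.trans ?_⟩
      rw [hk]
      exact indicatorConstLp_coeFn
    -- The indicators of `A` and `Aᶜ` are multiples of the same function, so one of them vanishes.
    obtain ⟨k, hk⟩ := h_indicator A hA hTA
    obtain ⟨l, hl⟩ := h_indicator Aᶜ hA.compl (by rw [preimage_compl, hTA])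
    obtain rfl | hk0 := eq_or_ne k 0
    · right
      filter_upwards [hk] with x hx hxA
      simp [hxA] at hx
    · left
      filter_upwards [hk, hl] with x hx hx'
      by_contra hxA
      have hfx : f x = 0 := by simpa [hxA, hk0] using hx
      simp [hxA, hfx] at hx'

end Koopman

section Eigenfunctions

variable {X : Type*} [MeasurableSpace X] {μ : Measure X} {T : X → X}

/-- `f` is a unimodular eigenfunction of `T` with eigenvalue `c`: the eigenvalue equation holds
almost everywhere, but the values of `f` lie on the circle everywhere. -/
structure IsEigenfunction (μ : Measure X) (T : X → X) (c : Circle) (f : X → Circle) : Prop where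
  measurable : Measurable f
  ae_comp_eq : ∀ᵐ x ∂μ, f (T x) = c * f x

namespace IsEigenfunction

variable {c d : Circle} {f g : X → Circle}

lemma one : IsEigenfunction μ T 1 fun _ => 1 where
  measurable := measurable_const
  ae_comp_eq := by simp

lemma mul (hf : IsEigenfunction μ T c f) (hg : IsEigenfunction μ T d g) :
    IsEigenfunction μ T (c * d) fun x => f x * g x where
  measurable := hf.measurable.mul hg.measurable
  ae_comp_eq := by
    filter_upwards [hf.ae_comp_eq, hg.ae_comp_eq] with x hfx hgx
    rw [hfx, hgx, mul_mul_mul_comm]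

lemma inv (hf : IsEigenfunction μ T c f) : IsEigenfunction μ T c⁻¹ fun x => (f x)⁻¹ where
  measurable := hf.measurable.inv
  ae_comp_eq := by
    filter_upwards [hf.ae_comp_eq] with x hfx
    rw [hfx, mul_inv]

lemma div_const (hf : IsEigenfunction μ T c f) (k : Circle) :
    IsEigenfunction μ T c fun x => f x / k where
  measurable := hf.measurable.div_const k
  ae_comp_eq := by
    filter_upwards [hf.ae_comp_eq] with x hfx
    rw [hfx, mul_div_assoc]

theorem ae_eq_const_mul (hT : Ergodic T μ) (hf : IsEigenfunction μ T c f)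
    (hg : IsEigenfunction μ T c g) : ∃ k, ∀ᵐ x ∂μ, f x = k * g x := by
  have h_inv : (f / g) ∘ T =ᵐ[μ] f / g := by
    filter_upwards [hf.ae_comp_eq, hg.ae_comp_eq] with x hfx hgx
    simp [hfx, hgx]
  obtain ⟨k, hk⟩ := hT.ae_eq_const_of_ae_eq_comp_ae
    (hf.measurable.div hg.measurable).aestronglyMeasurable h_inv
  refine ⟨k, ?_⟩
  filter_upwards [hk] with x hx
  exact div_eq_iff_eq_mul.1 hx

end IsEigenfunction

/-- The eigenvalues of `T`, as a subgroup of the circle. -/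
def eigenvalueGroup (μ : Measure X) (T : X → X) : Subgroup Circle where
  carrier := {c | ∃ f, IsEigenfunction μ T c f}
  mul_mem' := fun ⟨_, hf⟩ ⟨_, hg⟩ => ⟨_, hf.mul hg⟩
  one_mem' := ⟨_, .one⟩
  inv_mem' := fun ⟨_, hf⟩ => ⟨_, hf.inv⟩

lemma norm_mul_circleExp_arg (z : ℂ) : ‖z‖ * (Circle.exp z.arg : ℂ) = z := by
  rw [Circle.coe_exp, Complex.norm_mul_exp_arg_mul_I]

lemma circleExp_arg_mul (c : Circle) {z : ℂ} (hz : z ≠ 0) :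
    Circle.exp (c * z : ℂ).arg = c * Circle.exp z.arg := by
  refine Circle.ext (mul_left_cancel₀ (Complex.ofReal_ne_zero.2 (norm_ne_zero_iff.2 hz)) ?_)
  calc (‖z‖ : ℂ) * Circle.exp (c * z : ℂ).arg
      = ‖(c * z : ℂ)‖ * Circle.exp (c * z : ℂ).arg := by rw [norm_mul, Circle.norm_coe, one_mul]
    _ = c * z := norm_mul_circleExp_arg _
    _ = c * (‖z‖ * Circle.exp z.arg) := by rw [norm_mul_circleExp_arg]
    _ = ‖z‖ * (c * Circle.exp z.arg : Circle) := by rw [Circle.coe_mul, mul_left_comm]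

theorem exists_isEigenfunction_of_koopman_eq_smul (hT : Ergodic T μ) {f : Lp ℂ 2 μ} (hf : f ≠ 0)
    {c : Circle} (hfc : koopman hT.toMeasurePreserving f = (c : ℂ) • f) :
    ∃ g, IsEigenfunction μ T c g ∧ ∃ r : ℂ, ∀ᵐ x ∂μ, f x = r * g x := by
  have hfT : ∀ᵐ x ∂μ, f (T x) = c * f x := by
    filter_upwards [coeFn_koopman hT.toMeasurePreserving f, Lp.coeFn_smul (c : ℂ) f] with x hx hx'
    rw [← Function.comp_apply (f := f), ← hx, hfc, hx', Pi.smul_apply, smul_eq_mul]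
  have hf_meas : Measurable f := (Lp.stronglyMeasurable f).measurable
  have h_inv : (fun x => ‖f x‖) ∘ T =ᵐ[μ] fun x => ‖f x‖ := by
    filter_upwards [hfT] with x hx
    rw [Function.comp_apply, hx, norm_mul, Circle.norm_coe, one_mul]
  obtain ⟨r, hr⟩ := hT.ae_eq_const_of_ae_eq_comp_ae hf_meas.norm.aestronglyMeasurable h_inv
  have hr0 : r ≠ 0 := by
    rintro rfl
    refine hf ((Lp.eq_zero_iff_ae_eq_zero).2 ?_)
    filter_upwards [hr] with x hx using norm_eq_zero.1 hx
  refine ⟨fun x => Circle.exp (f x).arg, ⟨by fun_prop, ?_⟩, r, ?_⟩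
  · filter_upwards [hfT, hr] with x hx hrx
    have hfx : f x ≠ 0 := norm_ne_zero_iff.1 (hrx.trans_ne hr0)
    rw [hx, circleExp_arg_mul c hfx]
  · filter_upwards [hr] with x hrx
    rw [← show ‖f x‖ = r from hrx, norm_mul_circleExp_arg]

variable [IsFiniteMeasure μ] [NeZero μ]

theorem IsEigenfunction.hasEigenvalue_koopman (hT : MeasurePreserving T μ μ) {c : Circle}
    {f : X → Circle} (hf : IsEigenfunction μ T c f) :
    Module.End.HasEigenvalue (koopman hT).toLinearMap (c : ℂ) := by
  have hf_meas := hf.measurable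
  have hf_Lp : MemLp (fun x => (f x : ℂ)) 2 μ :=
    .of_bound (Measurable.aestronglyMeasurable (by fun_prop)) 1
      (.of_forall fun x => (Circle.norm_coe (f x)).le)
  refine Module.End.hasEigenvalue_of_hasEigenvector (x := hf_Lp.toLp) ⟨?_, ?_⟩
  · refine Module.End.mem_eigenspace_iff.2 (Lp.ext ?_)
    filter_upwards [coeFn_koopman hT hf_Lp.toLp, hT.quasiMeasurePreserving.ae hf_Lp.coeFn_toLp,
      Lp.coeFn_smul (c : ℂ) hf_Lp.toLp, hf_Lp.coeFn_toLp, hf.ae_comp_eq] with x h₁ h₂ h₃ h₄ h₅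
    rw [LinearIsometry.coe_toLinearMap, h₁, h₃, Function.comp_apply, h₂, Pi.smul_apply, h₄, h₅,
      Circle.coe_mul, smul_eq_mul]
  · intro h0
    have h_ae : ∀ᵐ x ∂μ, (f x : ℂ) = 0 :=
      hf_Lp.coeFn_toLp.symm.trans (Lp.eq_zero_iff_ae_eq_zero.1 h0)
    obtain ⟨x, hx⟩ := h_ae.exists
    exact Circle.coe_ne_zero (f x) hx

theorem mem_eigenvalueGroup_iff (hT : Ergodic T μ) {c : Circle} :
    c ∈ eigenvalueGroup μ T ↔
      Module.End.HasEigenvalue (koopman hT.toMeasurePreserving).toLinearMap (c : ℂ) := by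
  refine ⟨fun ⟨_, hf⟩ => hf.hasEigenvalue_koopman hT.toMeasurePreserving, fun hc => ?_⟩
  obtain ⟨f, hf⟩ := hc.exists_hasEigenvector
  obtain ⟨g, hg, -⟩ := exists_isEigenfunction_of_koopman_eq_smul hT hf.2 hf.apply_eq_smul
  exact ⟨g, hg⟩

theorem countable_eigenvalueGroup [MeasurableSpace.CountablyGenerated X]
    (hT : MeasurePreserving T μ μ) : Countable (eigenvalueGroup μ T) := by
  have : Fact ((2 : ENNReal) ≠ ⊤) := ⟨ENNReal.ofNat_ne_top⟩
  refine ((countable_setOf_hasEigenvalue (koopman hT)).preimage Circle.coe_injective).mono ?_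
  rintro c ⟨f, hf⟩
  exact hf.hasEigenvalue_koopman hT

end Eigenfunctions

section Separation

open scoped ENNReal

lemma aestronglyMeasurable_of_topologicalClosure_span_eq_top {X 𝕜 E : Type*} [RCLike 𝕜]
    [NormedAddCommGroup E] [NormedSpace 𝕜 E] [CompleteSpace E] {m m₀ : MeasurableSpace X}
    {μ : Measure X} {p : ℝ≥0∞} [Fact (1 ≤ p)] (hm : m ≤ m₀) {s : Set (Lp E p μ)}
    (hs : (Submodule.span 𝕜 s).topologicalClosure = ⊤)
    (hsm : ∀ f ∈ s, AEStronglyMeasurable[m] f μ) (f : Lp E p μ) : AEStronglyMeasurable[m] f μ := by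
  have h_top : ⊤ ≤ lpMeas E 𝕜 m p μ := hs ▸ Submodule.topologicalClosure_minimal _
    (Submodule.span_le.2 hsm) (isClosed_aestronglyMeasurable hm)
  exact h_top Submodule.mem_top

lemma exists_measurableSet_ae_eq_of_topologicalClosure_span_eq_top {X 𝕜 : Type*} [RCLike 𝕜]
    {m m₀ : MeasurableSpace X} {μ : Measure X} [IsFiniteMeasure μ] {p : ℝ≥0∞} [Fact (1 ≤ p)]
    (hm : m ≤ m₀) {s : Set (Lp 𝕜 p μ)} (hs : (Submodule.span 𝕜 s).topologicalClosure = ⊤)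
    (hsm : ∀ f ∈ s, AEStronglyMeasurable[m] f μ) {A : Set X} (hA : MeasurableSet A) :
    ∃ B, MeasurableSet[m] B ∧ B =ᵐ[μ] A := by
  obtain ⟨g, hg, hAg⟩ := aestronglyMeasurable_of_topologicalClosure_span_eq_top hm hs hsm
    (indicatorConstLp p hA (measure_ne_top μ A) 1)
  refine ⟨g ⁻¹' {1}, hg.measurable (measurableSet_singleton 1), Filter.eventuallyEq_set.2 ?_⟩
  filter_upwards [hAg, indicatorConstLp_coeFn (p := p) (hs := hA) (hμs := measure_ne_top μ A)
    (c := (1 : 𝕜))] with x hgx hx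
  rw [mem_preimage, ← hgx, hx, mem_singleton_iff, ← Pi.one_def, indicator_eq_one_iff_mem]

lemma exists_injOn_of_forall_exists_preimage_ae_eq {X Z : Type*} [MeasurableSpace X]
    [MeasurableSpace.CountablySeparated X] {μ : Measure X} {F : X → Z}
    (hF : ∀ A, MeasurableSet A → ∃ B, F ⁻¹' B =ᵐ[μ] A) : ∃ B ∈ ae μ, InjOn F B := by
  obtain ⟨A, hA, hA_sep⟩ := exists_seq_separating X MeasurableSet.univ univ
  choose B hB using fun n => hF (A n) (hA n)
  refine ⟨{x | ∀ n, F x ∈ B n ↔ x ∈ A n}, ?_, fun x hx y hy hxy => ?_⟩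
  · exact ae_all_iff.2 fun n => (hB n).mem_iff
  · exact hA_sep x (mem_univ x) y (mem_univ y) fun n => by rw [← hx n, ← hy n, hxy]

theorem exists_injOn_of_topologicalClosure_span_eq_top {X Z 𝕜 : Type*} [RCLike 𝕜]
    [MeasurableSpace X] [MeasurableSpace.CountablySeparated X] [MeasurableSpace Z]
    {μ : Measure X} [IsFiniteMeasure μ] {p : ℝ≥0∞} [Fact (1 ≤ p)] {F : X → Z} (hF : Measurable F)
    {s : Set (Lp 𝕜 p μ)} (hs : (Submodule.span 𝕜 s).topologicalClosure = ⊤)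
    (hsF : ∀ f ∈ s, ∃ g : Z → 𝕜, Measurable g ∧ f =ᵐ[μ] g ∘ F) : ∃ B ∈ ae μ, InjOn F B := by
  have hsF_comap : ∀ f ∈ s, AEStronglyMeasurable[.comap F inferInstance] f μ := fun f hf =>
    let ⟨g, hg, hfg⟩ := hsF f hf
    ⟨g ∘ F, (hg.comp (comap_measurable F)).stronglyMeasurable, hfg⟩
  refine exists_injOn_of_forall_exists_preimage_ae_eq fun A hA => ?_
  obtain ⟨_, ⟨B, -, rfl⟩, hBA⟩ := exists_measurableSet_ae_eq_of_topologicalClosure_span_eq_top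
    hF.comap_le hs hsF_comap hA
  exact ⟨B, hBA⟩

end Separation

section Representation

variable {X : Type*} [MeasurableSpace X] {μ : Measure X}

theorem exists_isEigenfunction_ae_mem_characters [NeZero μ] {T : X → X}
    [Countable (eigenvalueGroup μ T)] (hT : Ergodic T μ) :
    ∃ F : X → eigenvalueGroup μ T → Circle,
      (∀ l : eigenvalueGroup μ T, IsEigenfunction μ T l (F · l)) ∧
        ∀ᵐ x ∂μ, F x ∈ characters (eigenvalueGroup μ T) := by
  choose f hf using fun l : eigenvalueGroup μ T => l.2
  choose c hc using fun l m => ((hf l).mul (hf m)).ae_eq_const_mul hT (hf (l * m))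
  have hc_ae : ∀ᵐ x ∂μ, ∀ l m, f l x * f m x = c l m * f (l * m) x :=
    ae_all_iff.2 fun l => ae_all_iff.2 (hc l)
  obtain ⟨x₀, hx₀⟩ := hc_ae.exists
  refine ⟨fun x l => f l x / f l x₀, fun l => (hf l).div_const (f l x₀), ?_⟩
  filter_upwards [hc_ae] with x hx
  refine ⟨MonoidHom.mk' (fun l => f l x / f l x₀) fun l m => ?_, rfl⟩
  rw [div_mul_div_comm, hx l m, hx₀ l m, mul_div_mul_left_eq_div]

lemma exists_measurable_ae_eq_comp_of_koopman_eq_smul {T : X → X} (hT : Ergodic T μ)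
    {F : X → eigenvalueGroup μ T → Circle}
    (hF : ∀ l : eigenvalueGroup μ T, IsEigenfunction μ T l (F · l)) {f : Lp ℂ 2 μ} {c : ℂ}
    (hfc : koopman hT.toMeasurePreserving f = c • f) :
    ∃ g : (eigenvalueGroup μ T → Circle) → ℂ, Measurable g ∧ f =ᵐ[μ] g ∘ F := by
  obtain rfl | hf := eq_or_ne f 0
  · exact ⟨0, measurable_const, Lp.coeFn_zero ℂ 2 μ⟩
  have hc : ‖c‖ = 1 := norm_eq_one_of_hasEigenvalue
    (Module.End.hasEigenvalue_of_hasEigenvector ⟨Module.End.mem_eigenspace_iff.2 hfc, hf⟩)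
  obtain ⟨c, rfl⟩ : ∃ d : Circle, (d : ℂ) = c := ⟨⟨c, mem_sphere_zero_iff_norm.2 hc⟩, rfl⟩
  obtain ⟨g, hg, r, hr⟩ := exists_isEigenfunction_of_koopman_eq_smul hT hf hfc
  obtain ⟨k, hk⟩ := hg.ae_eq_const_mul hT (hF ⟨c, g, hg⟩)
  refine ⟨fun z => r * (k * z ⟨c, g, hg⟩ : Circle), by fun_prop, ?_⟩
  filter_upwards [hr, hk] with x hrx hkx
  rw [hrx, hkx, Function.comp_apply]

theorem exists_isIsomorphismVia_dualRotation [StandardBorelSpace X] [IsProbabilityMeasure μ]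
    {T : X ≃ᵐ X} (hT : Ergodic T μ)
    (hds : (Submodule.span ℂ {f : Lp ℂ 2 μ | ∃ c : ℂ,
      koopman hT.toMeasurePreserving f = c • f}).topologicalClosure = ⊤) :
    ∃ P F, IsDualRotationMeasure (eigenvalueGroup μ T).subtype P ∧
      IsIsomorphismVia μ P T (MeasurableEquiv.mulLeft ⇑(eigenvalueGroup μ T).subtype) F := by
  have := countable_eigenvalueGroup hT.toMeasurePreserving
  have : PolishSpace Circle := inferInstance
  obtain ⟨F, hF, hF_char⟩ := exists_isEigenfunction_ae_mem_characters hT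
  have hF_meas : Measurable F := measurable_pi_lambda F fun l => (hF l).measurable
  have hFT : ∀ᵐ x ∂μ, F (T x) = ⇑(eigenvalueGroup μ T).subtype * F x := by
    filter_upwards [ae_all_iff.2 fun l => (hF l).ae_comp_eq] with x hx using funext hx
  obtain ⟨B, hB, hFB⟩ := exists_injOn_of_topologicalClosure_span_eq_top hF_meas hds
    fun f ⟨c, hfc⟩ => exists_measurable_ae_eq_comp_of_koopman_eq_smul hT hF hfc
  exact ⟨μ.map F, F, ⟨Measure.isProbabilityMeasure_map hF_meas.aemeasurable,
      measurePreserving_map_of_ae_comm hT.toMeasurePreserving hF_meas (measurable_const_mul _) hFT,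
      (ae_map_iff hF_meas.aemeasurable isClosed_characters.measurableSet).2 hF_char⟩,
    isIsomorphismVia_map_of_injOn hT.toMeasurePreserving hF_meas hFT hB hFB⟩

end Representation

theorem halmos_von_neumann_general
    {X Y : Type*} [MeasurableSpace X] [StandardBorelSpace X]
    [MeasurableSpace Y] [StandardBorelSpace Y]
    (μ : Measure X) (ν : Measure Y) [IsProbabilityMeasure μ] [IsProbabilityMeasure ν]
    (T : X ≃ᵐ X) (S : Y ≃ᵐ Y)
    (hT : Ergodic T μ) (hS : MeasurePreserving S ν ν)
    (hds : (Submodule.span ℂ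
        {f : Lp ℂ 2 μ | ∃ c : ℂ,
          Lp.compMeasurePreserving (⇑T) hT.toMeasurePreserving f = c • f}).topologicalClosure
        = ⊤)
    (U : Lp ℂ 2 ν ≃L[ℂ] Lp ℂ 2 μ)
    (hU : ∀ g : Lp ℂ 2 ν,
      U (Lp.compMeasurePreserving (⇑S) hS g)
        = Lp.compMeasurePreserving (⇑T) hT.toMeasurePreserving (U g)) :
    ∃ φ : X → Y, IsIsomorphismVia μ ν T S φ := by
  have hU_semiconj : Function.Semiconj U (koopman hS) (koopman hT.toMeasurePreserving) := hU
  have hU_symm : Function.Semiconj U.symm (koopman hT.toMeasurePreserving) (koopman hS) :=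
    hU_semiconj.inverse_left U.symm_apply_apply U.apply_symm_apply
  have hS_ergodic : Ergodic S ν := (ergodic_iff_rank_eigenspace_koopman_one_le_one hS).2 <|
    rank_eigenspace_le_one_of_semiconj (U := (U : Lp ℂ 2 ν →ₗ[ℂ] Lp ℂ 2 μ)) U.injective hU_semiconj
      ((ergodic_iff_rank_eigenspace_koopman_one_le_one hT.toMeasurePreserving).1 hT)
  have hS_discrete := topologicalClosure_span_eigenvectors_eq_top_of_semiconj
    (V := (U.symm : Lp ℂ 2 μ →L[ℂ] Lp ℂ 2 ν)) U.symm.surjective.denseRange hU_symm hds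
  have h_group : eigenvalueGroup ν S = eigenvalueGroup μ T := SetLike.ext fun c => by
    rw [mem_eigenvalueGroup_iff hS_ergodic, mem_eigenvalueGroup_iff hT]
    exact ⟨hasEigenvalue_of_semiconj (V := (U : Lp ℂ 2 ν →ₗ[ℂ] Lp ℂ 2 μ)) U.injective hU_semiconj,
      hasEigenvalue_of_semiconj (V := (U.symm : Lp ℂ 2 μ →ₗ[ℂ] Lp ℂ 2 ν)) U.symm.injective hU_symm⟩
  obtain ⟨P, F, hP, hF⟩ := exists_isIsomorphismVia_dualRotation hT hds
  obtain ⟨Q, G, hQ, hG⟩ := h_group ▸ exists_isIsomorphismVia_dualRotation hS_ergodic hS_discrete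
  have := countable_eigenvalueGroup hT.toMeasurePreserving
  obtain rfl := hP.unique (eigenvalueGroup μ T).subtype_injective hQ
  obtain ⟨ψ, hψ⟩ := hG.symm
  exact ⟨ψ ∘ F, hF.trans hψ⟩

/-- Halmos–von Neumann: an ergodic system with discrete spectrum is isomorphic to any
system spectrally isomorphic to it. -/
theorem halmos_von_neumann
    {X Y : Type*} [MeasurableSpace X] [StandardBorelSpace X]
    [MeasurableSpace Y] [StandardBorelSpace Y]
    (μ : Measure X) (ν : Measure Y) [IsProbabilityMeasure μ] [IsProbabilityMeasure ν]
    (T : X ≃ᵐ X) (S : Y ≃ᵐ Y)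
    (hT : Ergodic T μ) (hS : MeasurePreserving S ν ν)
    -- `T` has discrete spectrum: the span of the eigenvectors of the Koopman operator
    -- `f ↦ f ∘ T` is dense in `L²(μ)`.
    (hds : (Submodule.span ℂ
        {f : Lp ℂ 2 μ | ∃ c : ℂ,
          Lp.compMeasurePreserving (⇑T) hT.toMeasurePreserving f = c • f}).topologicalClosure
        = ⊤)
    -- `S` is spectrally isomorphic to `T`: a unitary `U : L²(ν) → L²(μ)` intertwining
    -- the Koopman operators.
    (U : Lp ℂ 2 ν ≃ₗᵢ[ℂ] Lp ℂ 2 μ)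
    (hU : ∀ g : Lp ℂ 2 ν,
      U (Lp.compMeasurePreserving (⇑S) hS g)
        = Lp.compMeasurePreserving (⇑T) hT.toMeasurePreserving (U g)) :
    ∃ φ : X → Y, IsIsomorphismVia μ ν T S φ :=
  halmos_von_neumann_general μ ν T S hT hS hds U.toContinuousLinearEquiv hU
end
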